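/- Let h ∈ ℝ[x₁,…,xₙ] be a homogeneous polynomial hyperbolic with respect to e ∈ ℝⁿ whose hyperbolicity cone Λ_e(h) is pointed (contains no line). Then the polynomials h_k(x) := (id + (1/k)·ℓ·∂_e)^{deg h} h(x), where ℓ is any linear form that is strictly positive on Λ_e(h) \ {0}, are hyperbolic with respect to e for all sufficiently large k, every non-zero boundary point of Λ_e(h_k) is a smooth point of h_k, and h_k → h coefficientwise as k → ∞; consequently Λ_e(h) is the limit of a sequence of spectrahedral shadows Λ_e(h_k). -/

import Mathlib

open MvPolynomial

/-- The univariate polynomial `t ↦ h(a + t·v)` obtained by restricting a multivariate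
polynomial `h` to the line through `a` with direction `v`. -/
noncomputable def linePoly {n : ℕ} (h : MvPolynomial (Fin n) ℝ) (a v : Fin n → ℝ) :
    Polynomial ℝ :=
  MvPolynomial.aeval (fun i => Polynomial.C (a i) + Polynomial.C (v i) * Polynomial.X) h

/-- A real univariate polynomial has only real roots. -/
def RealRooted (q : Polynomial ℝ) : Prop :=
  ∀ z : ℂ, Polynomial.aeval z q = 0 → z.im = 0

/-- A real univariate polynomial has only non-negative real roots. -/
def NonnegRealRooted (q : Polynomial ℝ) : Prop :=
  ∀ z : ℂ, Polynomial.aeval z q = 0 → z.im = 0 ∧ 0 ≤ z.re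

/-- `h` is hyperbolic in direction `e`: `h(e) ≠ 0` and for all `a` the univariate
polynomial `t ↦ h(a - t·e)` has only real roots. -/
def IsHyperbolic {n : ℕ} (h : MvPolynomial (Fin n) ℝ) (e : Fin n → ℝ) : Prop :=
  MvPolynomial.eval e h ≠ 0 ∧ ∀ a : Fin n → ℝ, RealRooted (linePoly h a (-e))

/-- The hyperbolicity cone `Λ_e(h)`. -/
def hypCone {n : ℕ} (h : MvPolynomial (Fin n) ℝ) (e : Fin n → ℝ) : Set (Fin n → ℝ) :=
  {a | NonnegRealRooted (linePoly h a (-e))}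

/-- multiplicity (order of vanishing) of `h` at `a`: the smallest `m` such that the
degree-`m` homogeneous component of `h(x + a)` is non-zero. -/
noncomputable def multAt {n : ℕ} (h : MvPolynomial (Fin n) ℝ) (a : Fin n → ℝ) : ℕ :=
  sInf {m | MvPolynomial.homogeneousComponent m
    (MvPolynomial.aeval (fun i => MvPolynomial.X i + MvPolynomial.C (a i)) h) ≠ 0}

/-- `p` is a real-zero polynomial with respect to `e`. -/
def IsRealZero {n : ℕ} (p : MvPolynomial (Fin n) ℝ) (e : Fin n → ℝ) : Prop :=
  MvPolynomial.eval e p ≠ 0 ∧ ∀ v : Fin n → ℝ, RealRooted (linePoly p e v)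

/-- The rigidly convex set `S_e(p)` of a real-zero polynomial. -/
def rigidSet {n : ℕ} (p : MvPolynomial (Fin n) ℝ) (e : Fin n → ℝ) : Set (Fin n → ℝ) :=
  {a | ∀ t : ℝ, 0 ≤ t → t < 1 → ¬ (linePoly p e (a - e)).IsRoot t}

/-- A polynomial is strictly quasi-concave at `a` if its Hessian at `a` is negative
definite on the orthogonal complement of its gradient at `a`. -/
def StrictQuasiConcaveAt {n : ℕ} (g : MvPolynomial (Fin n) ℝ) (a : Fin n → ℝ) : Prop :=
  ∀ v : Fin n → ℝ, v ≠ 0 →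
    (∑ i, v i * MvPolynomial.eval a (MvPolynomial.pderiv i g)) = 0 →
    (∑ i, ∑ j, v i * v j *
      MvPolynomial.eval a (MvPolynomial.pderiv i (MvPolynomial.pderiv j g))) < 0

/-- A spectrahedral shadow (cone version): a linear image of
`{a : a₁M₁ + ⋯ + aₘMₘ ⪰ 0}` for real symmetric matrices `Mᵢ`. -/
def IsSpectrahedralShadowCone {n : ℕ} (S : Set (Fin n → ℝ)) : Prop :=
  ∃ (m d : ℕ) (M : Fin m → Matrix (Fin d) (Fin d) ℝ)
    (L : (Fin m → ℝ) →ₗ[ℝ] (Fin n → ℝ)),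
      (∀ i, (M i).IsSymm) ∧ S = L '' {a | (∑ i, a i • M i).PosSemidef}

/-- A spectrahedral shadow: a linear image of
`{b : M₀ + b₁M₁ + ⋯ + bₘMₘ ⪰ 0}` for real symmetric matrices `Mᵢ`. -/
def IsSpectrahedralShadow {n : ℕ} (S : Set (Fin n → ℝ)) : Prop :=
  ∃ (m d : ℕ) (M₀ : Matrix (Fin d) (Fin d) ℝ) (M : Fin m → Matrix (Fin d) (Fin d) ℝ)
    (L : (Fin m → ℝ) →ₗ[ℝ] (Fin n → ℝ)),
      M₀.IsSymm ∧ (∀ i, (M i).IsSymm) ∧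
      S = L '' {b | (M₀ + ∑ i, b i • M i).PosSemidef}

/-- A convex set is pointed if it contains no affine line. -/
def PointedSet {n : ℕ} (S : Set (Fin n → ℝ)) : Prop :=
  ¬ ∃ (a v : Fin n → ℝ), v ≠ 0 ∧ ∀ t : ℝ, a + t • v ∈ S

/-- Directional derivative `∂_e h = Σᵢ eᵢ ∂h/∂xᵢ`. -/
noncomputable def dirDeriv {n : ℕ} (e : Fin n → ℝ) (h : MvPolynomial (Fin n) ℝ) :
    MvPolynomial (Fin n) ℝ :=
  ∑ i, e i • MvPolynomial.pderiv i h

/-- Nuij's approximation sequence: `h_k = (id + (1/k)·ℓ·∂_e)^d h`. -/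
noncomputable def nuijSeq {n : ℕ} (l e : Fin n → ℝ) (d : ℕ)
    (h : MvPolynomial (Fin n) ℝ) (k : ℕ) : MvPolynomial (Fin n) ℝ :=
  (fun q => q + (1 / (k : ℝ)) •
    ((∑ i, MvPolynomial.C (l i) * MvPolynomial.X i) * dirDeriv e q))^[d] h

/-- linear form with coefficient vector `y` -/
noncomputable def lin {K : Type*} [Field K] {n : ℕ} (y : Fin n → K) : MvPolynomial (Fin n) K :=
  ∑ i, C (y i) * X i

theorem lin_add {K : Type*} [Field K] {n : ℕ} (x y : Fin n → K) :
    lin (x + y) = lin x + lin y := by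
  simp [lin, add_mul, Finset.sum_add_distrib]

theorem lin_smul {K : Type*} [Field K] {n : ℕ} (c : K) (y : Fin n → K) :
    lin (c • y) = c • lin y := by
  simp [lin, Finset.smul_sum, smul_eq_C_mul, mul_assoc]

/-- `lin` as a linear map -/
noncomputable def linL {K : Type*} [Field K] {n : ℕ} :
    (Fin n → K) →ₗ[K] MvPolynomial (Fin n) K where
  toFun := lin
  map_add' := lin_add
  map_smul' := lin_smul

theorem linL_apply {K : Type*} [Field K] {n : ℕ} (y : Fin n → K) : linL y = lin y := rfl

theorem lin_zero {K : Type*} [Field K] {n : ℕ} : lin (0 : Fin n → K) = 0 := by simp [lin]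

theorem lin_sub {K : Type*} [Field K] {n : ℕ} (x y : Fin n → K) :
    lin (x - y) = lin x - lin y := map_sub linL x y

theorem lin_sum {K : Type*} [Field K] {n : ℕ} {ι : Type*} (s : Finset ι) (f : ι → Fin n → K) :
    lin (∑ i ∈ s, f i) = ∑ i ∈ s, lin (f i) := map_sum linL f s

theorem exists_polar {K : Type*} [Field K] [CharZero K] {n d : ℕ} (g : MvPolynomial (Fin n) K)
    (hg : g.IsHomogeneous d) :
    ∃ Φ : MvPolynomial (Fin n) K →ₗ[K] K, ∀ y, Φ (lin y ^ d) = eval y g := by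
  classical
  refine ⟨∑ m ∈ g.support, (coeff m g * ((m.multinomial : ℕ) : K)⁻¹) • lcoeff K m, fun y => ?_⟩
  rw [MvPolynomial.eval_eq]
  simp only [LinearMap.sum_apply, LinearMap.smul_apply, lcoeff_apply, smul_eq_mul]
  refine Finset.sum_congr rfl fun m hm => ?_
  have h1 : m.sum (fun _ k => k) = d := by
    have := hg (mem_support_iff.mp hm)
    rw [Finsupp.weight_apply] at this
    simpa using this
  have h2 : (lin y : MvPolynomial (Fin n) K)
      = (Finsupp.equivFunOnFinite.symm y).linearCombination K X := by
    rw [Finsupp.linearCombination_apply, Finsupp.sum_fintype _ _ (by simp)]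
    simp [lin, smul_eq_C_mul]
  rw [h2, coeff_linearCombination_X_pow, if_pos h1]
  have h3 : ((m.multinomial : ℕ) : K) ≠ 0 := by
    rw [Finsupp.multinomial_eq]
    exact_mod_cast (Nat.multinomial_pos _ _).ne'
  simp only [Finsupp.equivFunOnFinite_symm_apply_apply, Finsupp.prod]
  field_simp

/-- restriction to a line, over any field -/
noncomputable def lineK {K : Type*} [Field K] {n : ℕ} (h : MvPolynomial (Fin n) K)
    (a v : Fin n → K) : Polynomial K :=
  MvPolynomial.aeval (fun i => Polynomial.C (a i) + Polynomial.C (v i) * Polynomial.X) h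

theorem linePoly_eq {n : ℕ} (h : MvPolynomial (Fin n) ℝ) (a v : Fin n → ℝ) :
    linePoly h a v = lineK h a v := rfl

theorem lineK_eval {K : Type*} [Field K] {n : ℕ} (h : MvPolynomial (Fin n) K)
    (a v : Fin n → K) (t : K) : (lineK h a v).eval t = eval (a + t • v) h := by
  unfold lineK
  induction h using MvPolynomial.induction_on with
  | C r => simp
  | add p q hp hq => simp [hp, hq]
  | mul_X p i hp => simp [hp]; left; ring

theorem lineK_expand {K : Type*} [Field K] [CharZero K] {n d : ℕ} {g : MvPolynomial (Fin n) K}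
    {Φ : MvPolynomial (Fin n) K →ₗ[K] K} (hΦ : ∀ y, Φ (lin y ^ d) = eval y g)
    (a v : Fin n → K) :
    lineK g a v = ∑ j ∈ Finset.range (d + 1),
      Polynomial.C ((d.choose j : K) * Φ (lin a ^ (d - j) * lin v ^ j)) * Polynomial.X ^ j := by
  apply Polynomial.funext
  intro t
  rw [lineK_eval, ← hΦ, lin_add, lin_smul, add_comm, add_pow, map_sum, Polynomial.eval_finsetSum]
  refine Finset.sum_congr rfl fun j _ => ?_
  have : (t • lin v) ^ j * lin a ^ (d - j) * ((d.choose j : ℕ) : MvPolynomial (Fin n) K)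
      = (t ^ j * d.choose j : K) • (lin a ^ (d - j) * lin v ^ j) := by
    rw [smul_pow]
    simp only [smul_eq_C_mul, map_mul, map_pow, map_natCast]
    ring
  rw [this, map_smul]
  simp
  ring

theorem lineK_coeff {K : Type*} [Field K] [CharZero K] {n d : ℕ} {g : MvPolynomial (Fin n) K}
    {Φ : MvPolynomial (Fin n) K →ₗ[K] K} (hΦ : ∀ y, Φ (lin y ^ d) = eval y g)
    (a v : Fin n → K) (j : ℕ) (hj : j ≤ d) :
    (lineK g a v).coeff j = (d.choose j : K) * Φ (lin a ^ (d - j) * lin v ^ j) := by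
  rw [lineK_expand hΦ, Polynomial.finsetSum_coeff]
  simp only [Polynomial.coeff_C_mul_X_pow]
  rw [Finset.sum_ite_eq, if_pos (by simp; omega)]

theorem lineK_natDegree_le {K : Type*} [Field K] [CharZero K] {n d : ℕ}
    {g : MvPolynomial (Fin n) K} (hg : g.IsHomogeneous d)
    (a v : Fin n → K) : (lineK g a v).natDegree ≤ d := by
  obtain ⟨Φ, hΦ⟩ := exists_polar g hg
  rw [lineK_expand hΦ]
  apply Polynomial.natDegree_sum_le_of_forall_le
  intro j hj
  refine (Polynomial.natDegree_C_mul_X_pow_le _ _).trans ?_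
  simp at hj; omega

theorem lineK_coeff_top {K : Type*} [Field K] [CharZero K] {n d : ℕ}
    {g : MvPolynomial (Fin n) K} (hg : g.IsHomogeneous d)
    (a v : Fin n → K) : (lineK g a v).coeff d = eval v g := by
  obtain ⟨Φ, hΦ⟩ := exists_polar g hg
  rw [lineK_coeff hΦ _ _ d le_rfl, ← hΦ]
  simp

theorem lineK_natDegree {K : Type*} [Field K] [CharZero K] {n d : ℕ}
    {g : MvPolynomial (Fin n) K} (hg : g.IsHomogeneous d)
    (a v : Fin n → K) (hv : eval v g ≠ 0) : (lineK g a v).natDegree = d := by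
  refine le_antisymm (lineK_natDegree_le hg a v) (Polynomial.le_natDegree_of_ne_zero ?_)
  rwa [lineK_coeff_top hg]

theorem eval_smul_hom {K : Type*} [Field K] [CharZero K] {n d : ℕ}
    {g : MvPolynomial (Fin n) K} (hg : g.IsHomogeneous d) (c : K) (x : Fin n → K) :
    eval (c • x) g = c ^ d * eval x g := by
  obtain ⟨Φ, hΦ⟩ := exists_polar g hg
  rw [← hΦ, ← hΦ, lin_smul, smul_pow, map_smul, smul_eq_mul]

/-- evaluation at complex points -/
noncomputable def cev {n : ℕ} (g : MvPolynomial (Fin n) ℝ) (z : Fin n → ℂ) : ℂ :=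
  MvPolynomial.aeval z g

/-- complexification of a real vector -/
def cv {n : ℕ} (a : Fin n → ℝ) : Fin n → ℂ := fun i => (a i : ℂ)

theorem cev_eq {n : ℕ} (g : MvPolynomial (Fin n) ℝ) (z : Fin n → ℂ) :
    cev g z = eval z (map (algebraMap ℝ ℂ) g) := by
  rw [cev, MvPolynomial.aeval_def, MvPolynomial.eval_map]

theorem cev_cv {n : ℕ} (g : MvPolynomial (Fin n) ℝ) (a : Fin n → ℝ) :
    cev g (cv a) = ((eval a g : ℝ) : ℂ) := by
  unfold cev cv
  induction g using MvPolynomial.induction_on with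
  | C r => simp
  | add p q hp hq => simp [hp, hq]
  | mul_X p i hp => simp [hp]

theorem cev_line {n : ℕ} (g : MvPolynomial (Fin n) ℝ) (a v : Fin n → ℝ) (z : ℂ) :
    Polynomial.aeval z (linePoly g a v) = cev g (cv a + z • cv v) := by
  unfold linePoly cev cv
  induction g using MvPolynomial.induction_on with
  | C r => simp
  | add p q hp hq => simp [hp, hq]
  | mul_X p i hp => simp [hp]; left; ring

theorem cev_continuous {n : ℕ} (g : MvPolynomial (Fin n) ℝ) : Continuous (cev g) := by
  have : cev g = fun z => eval z (map (algebraMap ℝ ℂ) g) := funext (cev_eq g)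
  rw [this]
  exact MvPolynomial.continuous_eval _

theorem cev_smul_hom {n d : ℕ} {g : MvPolynomial (Fin n) ℝ} (hg : g.IsHomogeneous d)
    (c : ℂ) (x : Fin n → ℂ) : cev g (c • x) = c ^ d * cev g x := by
  rw [cev_eq, cev_eq, eval_smul_hom (hg.map _)]

theorem cev_conj {n : ℕ} (g : MvPolynomial (Fin n) ℝ) (z : Fin n → ℂ) :
    cev g (fun i => (starRingEnd ℂ) (z i)) = (starRingEnd ℂ) (cev g z) := by
  unfold cev
  induction g using MvPolynomial.induction_on with
  | C r => simp
  | add p q hp hq => simp [hp, hq]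
  | mul_X p i hp => simp [hp]

/-- roots close to almost-roots -/
theorem exists_root_near (p : Polynomial ℂ) (z₀ : ℂ) (ρ : ℝ) (hρ : 0 < ρ)
    (h : ‖p.eval z₀‖ < ‖p.leadingCoeff‖ * ρ ^ p.natDegree) :
    ∃ z, p.eval z = 0 ∧ ‖z₀ - z‖ < ρ := by
  by_contra hcon
  push Not at hcon
  have hs := IsAlgClosed.splits p
  have h1 := hs.eval_eq_prod_roots z₀
  have h2 := hs.natDegree_eq_card_roots
  have hp : p ≠ 0 := by rintro rfl; simp at h
  have key : ∀ s : Multiset ℂ, (∀ r ∈ s, ρ ≤ ‖z₀ - r‖) →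
      ρ ^ s.card ≤ ‖(s.map (fun r => z₀ - r)).prod‖ := by
    intro s
    induction s using Multiset.induction_on with
    | empty => simp
    | cons a s ih =>
      intro hr
      simp only [Multiset.card_cons, Multiset.map_cons, Multiset.prod_cons, norm_mul, pow_succ']
      exact mul_le_mul (hr a (by simp)) (ih fun r hr' => hr r (by simp [hr'])) (by positivity)
        (by positivity)
  have h3 := key p.roots (fun r hr => hcon r (Polynomial.isRoot_of_mem_roots hr))
  rw [← h2] at h3
  rw [h1, norm_mul] at h
  have := mul_le_mul_of_nonneg_left h3 (norm_nonneg p.leadingCoeff)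
  linarith

/-- factorization of real-rooted polynomials -/
theorem RealRooted.factor : ∀ (k : ℕ) (p : Polynomial ℝ), p.natDegree = k → p ≠ 0 →
    RealRooted p →
    ∃ s : Multiset ℝ, s.card = k ∧
      p = Polynomial.C p.leadingCoeff * (s.map (fun r => Polynomial.X - Polynomial.C r)).prod := by
  intro k
  induction k with
  | zero =>
    intro p hp h0 hr
    refine ⟨0, rfl, ?_⟩
    rw [Polynomial.eq_C_of_natDegree_eq_zero hp]; simp
  | succ k ih =>
    intro p hp h0 hr
    have hd : (p.map (algebraMap ℝ ℂ)).degree ≠ 0 := by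
      rw [Polynomial.degree_map]
      intro h
      have := Polynomial.natDegree_eq_zero_iff_degree_le_zero.mpr h.le
      omega
    obtain ⟨z, hz⟩ := IsAlgClosed.exists_root _ hd
    have hz' : Polynomial.aeval z p = 0 := by
      rw [Polynomial.IsRoot, Polynomial.eval_map_algebraMap] at hz; exact hz
    have hzr : z = ((z.re : ℝ) : ℂ) := by
      apply Complex.ext <;> simp [hr z hz']
    have hroot : p.IsRoot z.re := by
      rw [hzr] at hz'
      have : ((p.eval z.re : ℝ) : ℂ) = 0 := by
        rw [← hz']
        simpa using (Polynomial.aeval_algebraMap_apply ℂ z.re p).symm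
      exact_mod_cast this
    obtain ⟨q, hq⟩ := Polynomial.dvd_iff_isRoot.mpr hroot
    have hq0 : q ≠ 0 := by rintro rfl; simp at hq; exact h0 hq
    have hqd : q.natDegree = k := by
      rw [hq, Polynomial.natDegree_mul (Polynomial.X_sub_C_ne_zero _) hq0,
        Polynomial.natDegree_X_sub_C] at hp
      omega
    obtain ⟨s, hs1, hs2⟩ := ih q hqd hq0 (fun w hw => hr w (by rw [hq]; simp [hw]))
    refine ⟨z.re ::ₘ s, by simp [hs1], ?_⟩
    have hlc : p.leadingCoeff = q.leadingCoeff := by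
      rw [hq, Polynomial.leadingCoeff_mul]; simp
    rw [Multiset.map_cons, Multiset.prod_cons, hlc]
    conv_lhs => rw [hq, hs2]
    ring

/-- real-rooted polynomials grow away from the real axis -/
theorem RealRooted.norm_mono {p : Polynomial ℝ} (hr : RealRooted p) (z : ℂ) :
    |p.eval z.re| ≤ ‖Polynomial.aeval z p‖ := by
  by_cases h0 : p = 0
  · simp [h0]
  obtain ⟨s, -, hs⟩ := hr.factor _ p rfl h0
  have key : ∀ s : Multiset ℝ,
      |((s.map (fun r => Polynomial.X - Polynomial.C r)).prod).eval z.re| ≤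
      ‖Polynomial.aeval z ((s.map (fun r => Polynomial.X - Polynomial.C r)).prod)‖ := by
    intro s
    induction s using Multiset.induction_on with
    | empty => simp
    | cons a s ih =>
      simp only [Multiset.map_cons, Multiset.prod_cons, Polynomial.eval_mul, map_mul, norm_mul,
        abs_mul]
      refine mul_le_mul ?_ ih (by positivity) (by positivity)
      have := Complex.abs_re_le_norm (z - (a : ℂ))
      simpa using this
  rw [hs]
  simp only [Polynomial.eval_mul, map_mul, norm_mul, abs_mul]
  refine mul_le_mul ?_ (key s) (by positivity) (by positivity)
  simp

/-- Hyperbolicity with positive normalization. -/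
structure HP {n : ℕ} (g : MvPolynomial (Fin n) ℝ) (e : Fin n → ℝ) (d : ℕ) : Prop where
  hom : g.IsHomogeneous d
  pos : 0 < eval e g
  hyp : ∀ (a : Fin n → ℝ) (z : ℂ), cev g (cv a + z • cv e) = 0 → z.im = 0

theorem cv_neg {n : ℕ} (e : Fin n → ℝ) : cv (-e) = - cv e := by
  ext i; simp [cv]

theorem cv_add {n : ℕ} (a b : Fin n → ℝ) : cv (a + b) = cv a + cv b := by
  ext i; simp [cv]

theorem cv_smul {n : ℕ} (c : ℝ) (b : Fin n → ℝ) : cv (c • b) = (c : ℂ) • cv b := by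
  ext i; simp [cv]

theorem aeval_linePoly_neg {n : ℕ} (g : MvPolynomial (Fin n) ℝ) (a e : Fin n → ℝ) (z : ℂ) :
    Polynomial.aeval z (linePoly g a (-e)) = cev g (cv a + (-z) • cv e) := by
  rw [cev_line, cv_neg, smul_neg, neg_smul]

theorem HP.isHyperbolic {n d : ℕ} {g : MvPolynomial (Fin n) ℝ} {e : Fin n → ℝ} (H : HP g e d) :
    IsHyperbolic g e := by
  refine ⟨H.pos.ne', fun a z hz => ?_⟩
  rw [aeval_linePoly_neg] at hz
  simpa using H.hyp a _ hz

theorem IsHyperbolic.hp {n d : ℕ} {g : MvPolynomial (Fin n) ℝ} {e : Fin n → ℝ}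
    (H : IsHyperbolic g e) (hg : g.IsHomogeneous d) (hp : 0 < eval e g) : HP g e d := by
  refine ⟨hg, hp, fun a z hz => ?_⟩
  have := H.2 a (-z) (by rw [aeval_linePoly_neg, neg_neg]; exact hz)
  simpa using this

theorem HP.realRooted {n d : ℕ} {g : MvPolynomial (Fin n) ℝ} {e : Fin n → ℝ} (H : HP g e d)
    (a : Fin n → ℝ) : RealRooted (linePoly g a e) := by
  intro z hz
  rw [cev_line] at hz
  exact H.hyp a z hz

theorem HP.line_ne {n d : ℕ} {g : MvPolynomial (Fin n) ℝ} {e : Fin n → ℝ} (H : HP g e d)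
    (a : Fin n → ℝ) : linePoly g a e ≠ 0 := by
  intro h
  have := lineK_coeff_top H.hom a e
  rw [← linePoly_eq, h] at this
  have := H.pos
  simp at *
  linarith

theorem HP.line_lc {n d : ℕ} {g : MvPolynomial (Fin n) ℝ} {e : Fin n → ℝ} (H : HP g e d)
    (a : Fin n → ℝ) : (linePoly g a e).leadingCoeff = eval e g := by
  rw [Polynomial.leadingCoeff, linePoly_eq, lineK_natDegree H.hom a e H.pos.ne',
    lineK_coeff_top H.hom]

theorem HP.factor {n d : ℕ} {g : MvPolynomial (Fin n) ℝ} {e : Fin n → ℝ} (H : HP g e d)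
    (a : Fin n → ℝ) : ∃ s : Multiset ℝ, s.card = d ∧ linePoly g a e =
      Polynomial.C (eval e g) * (s.map (fun r => Polynomial.X - Polynomial.C r)).prod := by
  have := RealRooted.factor d (linePoly g a e) (lineK_natDegree H.hom a e H.pos.ne') (H.line_ne a)
    (H.realRooted a)
  rwa [H.line_lc] at this

theorem linePoly_eval {n : ℕ} (h : MvPolynomial (Fin n) ℝ)
    (a v : Fin n → ℝ) (t : ℝ) : (linePoly h a v).eval t = eval (a + t • v) h :=
  lineK_eval h a v t

theorem HP.cone_ge {n d : ℕ} {g : MvPolynomial (Fin n) ℝ} {e : Fin n → ℝ} (H : HP g e d)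
    {a : Fin n → ℝ} (ha : a ∈ hypCone g e) (t : ℝ) (ht : 0 < t) :
    eval e g * t ^ d ≤ eval (a + t • e) g := by
  obtain ⟨s, hs, hf⟩ := H.factor a
  rw [← linePoly_eval, hf, Polynomial.eval_mul, Polynomial.eval_C]
  refine mul_le_mul_of_nonneg_left ?_ H.pos.le
  have hroots : ∀ r ∈ s, r ≤ 0 := by
    intro r hr
    have h0 : (linePoly g a e).eval r = 0 := by
      rw [hf, Polynomial.eval_mul, Polynomial.eval_multiset_prod]
      rw [Multiset.prod_eq_zero (by simpa using ⟨r, hr, sub_self r⟩), mul_zero]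
    have := ha (-(r : ℂ)) (by
      rw [aeval_linePoly_neg, neg_neg, ← cv_smul, ← cv_add, cev_cv, ← linePoly_eval, h0]; simp)
    simpa using this.2
  rw [← hs]
  clear hs hf
  induction s using Multiset.induction_on with
  | empty => simp
  | cons b s ih =>
    simp only [Multiset.card_cons, Multiset.map_cons, Multiset.prod_cons, Polynomial.eval_mul,
      pow_succ']
    have hb := hroots b (by simp)
    refine mul_le_mul ?_ (ih fun r hr => hroots r (by simp [hr])) (by positivity) ?_
    · simp; linarith
    · simp; linarith

theorem HP.cone_pos {n d : ℕ} {g : MvPolynomial (Fin n) ℝ} {e : Fin n → ℝ} (H : HP g e d)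
    {a : Fin n → ℝ} (ha : a ∈ hypCone g e) (t : ℝ) (ht : 0 < t) :
    0 < eval (a + t • e) g :=
  lt_of_lt_of_le (mul_pos H.pos (pow_pos ht d)) (H.cone_ge ha t ht)

theorem HP.mem_cone {n d : ℕ} {g : MvPolynomial (Fin n) ℝ} {e : Fin n → ℝ} (H : HP g e d)
    {a : Fin n → ℝ} (ha : ∀ t : ℝ, 0 < t → 0 < eval (a + t • e) g) : a ∈ hypCone g e := by
  intro z hz
  rw [aeval_linePoly_neg] at hz
  have him := H.hyp _ _ hz
  simp at him
  refine ⟨him, ?_⟩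
  by_contra hre
  push Not at hre
  have hzr : -z = ((-z.re : ℝ) : ℂ) := by
    apply Complex.ext <;> simp [him]
  rw [hzr, ← cv_smul, ← cv_add, cev_cv] at hz
  have := ha (-z.re) (by linarith)
  norm_cast at hz
  linarith

theorem HP.mem_cone' {n d : ℕ} {g : MvPolynomial (Fin n) ℝ} {e : Fin n → ℝ} (H : HP g e d)
    {a : Fin n → ℝ} (ha : ∀ t : ℝ, 0 < t → eval e g * t ^ d ≤ eval (a + t • e) g) :
    a ∈ hypCone g e :=
  H.mem_cone fun t ht => lt_of_lt_of_le (mul_pos H.pos (pow_pos ht d)) (ha t ht)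

theorem HP.isClosed {n d : ℕ} {g : MvPolynomial (Fin n) ℝ} {e : Fin n → ℝ} (H : HP g e d) :
    IsClosed (hypCone g e) := by
  have : hypCone g e = ⋂ t : ℝ, ⋂ _ : 0 < t, {a | eval e g * t ^ d ≤ eval (a + t • e) g} := by
    ext a
    simp only [Set.mem_iInter, Set.mem_ofPred_eq]
    exact ⟨fun h => H.cone_ge h, fun h => H.mem_cone' h⟩
  rw [this]
  refine isClosed_iInter fun t => isClosed_iInter fun _ => isClosed_le continuous_const ?_
  exact (MvPolynomial.continuous_eval g).comp (by fun_prop)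

theorem HP.cone_add_e {n d : ℕ} {g : MvPolynomial (Fin n) ℝ} {e : Fin n → ℝ} (H : HP g e d)
    {a : Fin n → ℝ} (ha : a ∈ hypCone g e) (t : ℝ) (ht : 0 ≤ t) : a + t • e ∈ hypCone g e := by
  refine H.mem_cone fun t' ht' => ?_
  have := H.cone_pos ha (t + t') (by linarith)
  rwa [add_smul, ← add_assoc] at this

theorem HP.zero_mem {n d : ℕ} {g : MvPolynomial (Fin n) ℝ} {e : Fin n → ℝ} (H : HP g e d) :
    (0 : Fin n → ℝ) ∈ hypCone g e := by
  refine H.mem_cone fun t ht => ?_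
  rw [zero_add, eval_smul_hom H.hom]
  exact mul_pos (pow_pos ht d) H.pos

theorem HP.cone_smul {n d : ℕ} {g : MvPolynomial (Fin n) ℝ} {e : Fin n → ℝ} (H : HP g e d)
    {a : Fin n → ℝ} (ha : a ∈ hypCone g e) (c : ℝ) (hc : 0 ≤ c) : c • a ∈ hypCone g e := by
  rcases hc.eq_or_lt with rfl | hc
  · rw [zero_smul]; exact H.zero_mem
  refine H.mem_cone fun t ht => ?_
  have : c • a + t • e = c • (a + (t / c) • e) := by
    rw [smul_add, smul_smul]; congr 2; field_simp
  rw [this, eval_smul_hom H.hom]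
  exact mul_pos (pow_pos hc d) (H.cone_pos ha _ (by positivity))

/-- the open cone -/
def IC {n : ℕ} (g : MvPolynomial (Fin n) ℝ) (e : Fin n → ℝ) : Set (Fin n → ℝ) :=
  {a | ∀ τ ∈ Set.Icc (0 : ℝ) 1, 0 < eval ((1 - τ) • a + τ • e) g}

theorem IC.isOpen {n : ℕ} (g : MvPolynomial (Fin n) ℝ) (e : Fin n → ℝ) : IsOpen (IC g e) := by
  rw [isOpen_iff_eventually]
  intro a ha
  refine IsCompact.eventually_forall_of_forall_eventually isCompact_Icc fun τ hτ => ?_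
  have hc : Continuous fun z : (Fin n → ℝ) × ℝ => eval ((1 - z.2) • z.1 + z.2 • e) g :=
    (MvPolynomial.continuous_eval g).comp (by fun_prop)
  exact hc.continuousAt.eventually (lt_mem_nhds (ha τ hτ))

theorem HP.mem_IC {n d : ℕ} {g : MvPolynomial (Fin n) ℝ} {e : Fin n → ℝ} (H : HP g e d)
    {a : Fin n → ℝ} : a ∈ IC g e ↔ a ∈ hypCone g e ∧ 0 < eval a g := by
  constructor
  · intro h
    refine ⟨H.mem_cone fun t ht => ?_, by simpa using h 0 (by simp)⟩
    have h1 : 0 < 1 + t := by linarith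
    have := h (t / (1 + t)) ⟨by positivity, by rw [div_le_one h1]; linarith⟩
    have h2 : a + t • e = (1 + t) • ((1 - t / (1 + t)) • a + (t / (1 + t)) • e) := by
      rw [smul_add, smul_smul, smul_smul]
      congr 1
      · rw [show (1 + t) * (1 - t / (1 + t)) = 1 by field_simp; ring, one_smul]
      · congr 1; field_simp
    rw [h2, eval_smul_hom H.hom]
    exact mul_pos (pow_pos h1 d) this
  · rintro ⟨h1, h2⟩ τ ⟨h3, h4⟩
    rcases h4.eq_or_lt with rfl | h4
    · simpa using H.pos
    rcases h3.eq_or_lt with rfl | h3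
    · simpa using h2
    have h5 : 0 < 1 - τ := by linarith
    have : (1 - τ) • a + τ • e = (1 - τ) • (a + (τ / (1 - τ)) • e) := by
      rw [smul_add, smul_smul]; congr 2; field_simp
    rw [this, eval_smul_hom H.hom]
    exact mul_pos (pow_pos h5 d) (H.cone_pos h1 _ (by positivity))

theorem HP.add_e_mem_IC {n d : ℕ} {g : MvPolynomial (Fin n) ℝ} {e : Fin n → ℝ} (H : HP g e d)
    {a : Fin n → ℝ} (ha : a ∈ hypCone g e) (t : ℝ) (ht : 0 < t) : a + t • e ∈ IC g e :=
  H.mem_IC.mpr ⟨H.cone_add_e ha t ht.le, H.cone_pos ha t ht⟩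

theorem HP.path {n d : ℕ} {g : MvPolynomial (Fin n) ℝ} {e : Fin n → ℝ} (H : HP g e d)
    (p : ℝ → Fin n → ℝ) (hp : Continuous p) (h0 : p 0 ∈ IC g e)
    (hpos : ∀ τ ∈ Set.Icc (0 : ℝ) 1, 0 < eval (p τ) g) :
    ∀ τ ∈ Set.Icc (0 : ℝ) 1, p τ ∈ IC g e := by
  have := (isPreconnected_Icc (a := (0 : ℝ)) (b := 1)).subset_left_of_subset_union
    (u := p ⁻¹' IC g e) (v := p ⁻¹' (hypCone g e)ᶜ)
    ((IC.isOpen g e).preimage hp) (H.isClosed.isOpen_compl.preimage hp) ?_ ?_ ?_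
  · exact this
  · rw [Set.disjoint_left]
    intro τ h1 h2
    exact h2 (H.mem_IC.mp h1).1
  · intro τ hτ
    by_cases h : p τ ∈ hypCone g e
    · exact Or.inl (H.mem_IC.mpr ⟨h, hpos τ hτ⟩)
    · exact Or.inr h
  · exact ⟨0, by simp, h0⟩

/-- complex line polynomial -/
theorem cline_eval {n : ℕ} (g : MvPolynomial (Fin n) ℝ) (z : Fin n → ℂ) (v : Fin n → ℂ) (t : ℂ) :
    (lineK (map (algebraMap ℝ ℂ) g) z v).eval t = cev g (z + t • v) := by
  rw [lineK_eval, cev_eq]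

theorem cev_root_near {n d : ℕ} {g : MvPolynomial (Fin n) ℝ} (hg : g.IsHomogeneous d)
    (z : Fin n → ℂ) (a : Fin n → ℝ) (ha : 0 < eval a g) (t : ℂ) (ρ : ℝ) (hρ : 0 < ρ)
    (h : ‖cev g (z + t • cv a)‖ < eval a g * ρ ^ d) :
    ∃ t', cev g (z + t' • cv a) = 0 ∧ ‖t - t'‖ < ρ := by
  have hv : eval (cv a) (map (algebraMap ℝ ℂ) g) = ((eval a g : ℝ) : ℂ) := by
    rw [← cev_eq, cev_cv]
  have hv0 : eval (cv a) (map (algebraMap ℝ ℂ) g) ≠ 0 := by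
    rw [hv]; exact_mod_cast ha.ne'
  have hh := hg.map (algebraMap ℝ ℂ)
  obtain ⟨t', h1, h2⟩ := exists_root_near (lineK (map (algebraMap ℝ ℂ) g) z (cv a)) t ρ hρ (by
    rw [Polynomial.leadingCoeff, lineK_natDegree hh _ _ hv0, lineK_coeff_top hh, hv, cline_eval]
    simpa [abs_of_pos ha] using h)
  exact ⟨t', by rw [← cline_eval]; exact h1, h2⟩

theorem HP.garding_aux {n d : ℕ} {g : MvPolynomial (Fin n) ℝ} {e : Fin n → ℝ} (H : HP g e d)
    {a : Fin n → ℝ} (ha : a ∈ IC g e) (x : Fin n → ℝ) (δ : ℝ) (hδ : 0 < δ) (t : ℂ)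
    (ht : 0 ≤ t.im) : cev g ((cv x + (δ * Complex.I) • cv e) + t • cv a) ≠ 0 := by
  have hga : 0 < eval a g := (H.mem_IC.mp ha).2
  set F : ℝ → ℂ → ℂ := fun σ t => cev g (((σ : ℂ) • cv x + (δ * Complex.I) • cv e) + t • cv a)
    with hF
  have hFc : Continuous fun p : ℝ × ℂ => F p.1 p.2 := by
    refine (cev_continuous g).comp ?_
    have : Continuous fun p : ℝ × ℂ => (p.1 : ℂ) := Complex.continuous_ofReal.comp continuous_fst
    fun_prop
  have hreal : ∀ σ t, F σ t = 0 → t.im ≠ 0 := by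
    intro σ t h0 him
    have htr : t = ((t.re : ℝ) : ℂ) := by apply Complex.ext <;> simp [him]
    simp only [hF] at h0
    rw [htr] at h0
    have : (σ : ℂ) • cv x + (δ * Complex.I) • cv e + (t.re : ℂ) • cv a
        = cv (σ • x + t.re • a) + (δ * Complex.I) • cv e := by
      rw [cv_add, cv_smul, cv_smul]; abel
    rw [this] at h0
    have := H.hyp _ _ h0
    simp at this
    linarith
  have hsub := (isPreconnected_univ (α := ℝ)).subset_left_of_subset_union
    (u := {σ | ∀ t : ℂ, 0 ≤ t.im → F σ t ≠ 0}) (v := {σ | ∃ t : ℂ, 0 < t.im ∧ F σ t = 0})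
    ?_ ?_ ?_ ?_ ?_
  · have := hsub (Set.mem_univ 1) t ht
    simpa [hF] using this
  · -- open
    rw [isOpen_iff_eventually]
    intro σ₀ hσ₀
    have hnz : ∀ᶠ w in nhds (cv a), cev g w ≠ 0 := by
      apply (cev_continuous g).continuousAt.eventually_ne
      rw [cev_cv]; exact_mod_cast hga.ne'
    obtain ⟨r, hr, hr'⟩ := Metric.eventually_nhds_iff.mp hnz
    set R := ((|σ₀| + 1) * ‖cv x‖ + ‖(δ * Complex.I) • cv e‖) / r with hR
    have hbd : ∀ σ, |σ - σ₀| < 1 → ∀ t, F σ t = 0 → ‖t‖ ≤ R := by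
      intro σ hσ t h0
      by_cases ht0 : t = 0
      · rw [ht0, norm_zero]; positivity
      have h1 : cev g (cv a + t⁻¹ • ((σ : ℂ) • cv x + (δ * Complex.I) • cv e)) = 0 := by
        have : cv a + t⁻¹ • ((σ : ℂ) • cv x + (δ * Complex.I) • cv e)
          = t⁻¹ • (((σ : ℂ) • cv x + (δ * Complex.I) • cv e) + t • cv a) := by
          rw [smul_add t⁻¹ _ (t • cv a), smul_smul, inv_mul_cancel₀ ht0, one_smul, add_comm]
        rw [this, cev_smul_hom H.hom]
        simp only [hF] at h0
        rw [h0, mul_zero]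
      have h2 : r ≤ ‖t⁻¹ • ((σ : ℂ) • cv x + (δ * Complex.I) • cv e)‖ := by
        by_contra hlt
        push Not at hlt
        exact hr' (y := cv a + t⁻¹ • ((σ : ℂ) • cv x + (δ * Complex.I) • cv e))
          (by simpa [dist_eq_norm] using hlt) h1
      rw [norm_smul, norm_inv] at h2
      have htp : 0 < ‖t‖ := norm_pos_iff.mpr ht0
      have h3 : ‖(σ : ℂ) • cv x + (δ * Complex.I) • cv e‖
          ≤ (|σ₀| + 1) * ‖cv x‖ + ‖(δ * Complex.I) • cv e‖ := by
        refine (norm_add_le _ _).trans ?_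
        rw [norm_smul (σ : ℂ), Complex.norm_real, Real.norm_eq_abs]
        have : |σ| ≤ |σ₀| + 1 := by
          have := abs_sub_abs_le_abs_sub σ σ₀
          linarith
        gcongr
      rw [hR, le_div_iff₀ hr]
      calc ‖t‖ * r ≤ ‖t‖ * (‖t‖⁻¹ * ‖(σ : ℂ) • cv x + (δ * Complex.I) • cv e‖) := by gcongr
        _ = ‖(σ : ℂ) • cv x + (δ * Complex.I) • cv e‖ := by field_simp
        _ ≤ _ := h3
    have hK : IsCompact (Metric.closedBall (0 : ℂ) R ∩ {t : ℂ | 0 ≤ t.im}) :=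
      (isCompact_closedBall _ _).inter_right (isClosed_le continuous_const Complex.continuous_im)
    have hev : ∀ᶠ σ in nhds σ₀, ∀ t ∈ Metric.closedBall (0 : ℂ) R ∩ {t : ℂ | 0 ≤ t.im},
        F σ t ≠ 0 :=
      IsCompact.eventually_forall_of_forall_eventually hK fun t ht' =>
        hFc.continuousAt.eventually_ne (hσ₀ t ht'.2)
    have hev2 : ∀ᶠ σ in nhds σ₀, |σ - σ₀| < 1 := Metric.ball_mem_nhds σ₀ one_pos
    filter_upwards [hev, hev2] with σ h1 h2 t ht' h0
    exact h1 t ⟨by simpa using hbd σ h2 t h0, ht'⟩ h0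
  · rw [isOpen_iff_eventually]
    rintro σ₀ ⟨t₀, ht₀, h0⟩
    have hc : Continuous fun σ : ℝ => ‖F σ t₀‖ :=
      (hFc.comp (Continuous.prodMk_left t₀)).norm
    have : ∀ᶠ σ in nhds σ₀, ‖F σ t₀‖ < eval a g * t₀.im ^ d := by
      apply hc.continuousAt.eventually (gt_mem_nhds _)
      show ‖F σ₀ t₀‖ < _
      rw [h0, norm_zero]
      positivity
    filter_upwards [this] with σ hσ
    obtain ⟨t', h1, h2⟩ := cev_root_near H.hom _ a hga t₀ t₀.im ht₀ hσ
    refine ⟨t', ?_, h1⟩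
    have := (Complex.abs_im_le_norm (t₀ - t')).trans_lt h2
    rw [Complex.sub_im] at this
    have := (abs_lt.mp this).2
    linarith
  · rw [Set.disjoint_left]
    rintro σ h1 ⟨t, h2, h3⟩
    exact h1 t h2.le h3
  · intro σ _
    by_cases h : ∃ t : ℂ, 0 < t.im ∧ F σ t = 0
    · exact Or.inr h
    · refine Or.inl fun t ht' h0 => h ⟨t, lt_of_le_of_ne ht' (hreal σ t h0).symm, h0⟩
  · refine ⟨0, Set.mem_univ _, fun t ht' h0 => ?_⟩
    simp only [hF, Complex.ofReal_zero, zero_smul, zero_add] at h0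
    by_cases ht0 : t = 0
    · exact hreal 0 0 (by simpa [hF, ht0] using h0) (by simp)
    have h1 : cev g (cv a + (δ * Complex.I / t) • cv e) = 0 := by
      have : cv a + (δ * Complex.I / t) • cv e
          = t⁻¹ • ((δ * Complex.I) • cv e + t • cv a) := by
        rw [smul_add, smul_smul, smul_smul, inv_mul_cancel₀ ht0, one_smul, add_comm, div_eq_inv_mul]
      rw [this, cev_smul_hom H.hom, h0, mul_zero]
    have him := H.hyp _ _ h1
    set z := δ * Complex.I / t with hz
    have hzr : z = ((z.re : ℝ) : ℂ) := by apply Complex.ext <;> simp [him]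
    rw [hzr, ← cv_smul, ← cv_add, cev_cv] at h1
    have h2 : z.re < 0 := by
      by_contra hge
      push Not at hge
      have : 0 < eval (a + z.re • e) g := by
        rcases hge.eq_or_lt with h | h
        · rw [← h]; simpa using hga
        · exact H.cone_pos (H.mem_IC.mp ha).1 _ h
      norm_cast at h1
      linarith
    have h3 : δ * Complex.I = z * t := by rw [hz]; field_simp
    rw [hzr] at h3
    have h4 := congrArg Complex.im h3
    simp at h4
    nlinarith

theorem HP.garding {n d : ℕ} {g : MvPolynomial (Fin n) ℝ} {e : Fin n → ℝ} (H : HP g e d)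
    {a : Fin n → ℝ} (ha : a ∈ IC g e) : HP g a d := by
  have hga : 0 < eval a g := (H.mem_IC.mp ha).2
  have key : ∀ (x : Fin n → ℝ) (t : ℂ), cev g (cv x + t • cv a) = 0 → ¬ 0 < t.im := by
    intro x t h0 ht
    have hc : Continuous fun δ : ℝ =>
        ‖cev g ((cv x + ((δ : ℂ) * Complex.I) • cv e) + t • cv a)‖ := by
      refine ((cev_continuous g).comp ?_).norm
      have := Complex.continuous_ofReal
      fun_prop
    have : ∀ᶠ δ : ℝ in nhds (0 : ℝ),
        ‖cev g ((cv x + ((δ : ℂ) * Complex.I) • cv e) + t • cv a)‖ < eval a g * t.im ^ d := by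
      apply hc.continuousAt.eventually (gt_mem_nhds _)
      simp [h0]
      positivity
    obtain ⟨δ, h1, h2⟩ := ((this.filter_mono nhdsWithin_le_nhds).and
      (self_mem_nhdsWithin (s := Set.Ioi (0 : ℝ)))).exists
    obtain ⟨t', h3, h4⟩ := cev_root_near H.hom _ a hga t t.im ht h1
    refine H.garding_aux ha x δ h2 t' ?_ h3
    have := (Complex.abs_im_le_norm (t - t')).trans_lt h4
    rw [Complex.sub_im] at this
    have := (abs_lt.mp this).2
    linarith
  refine ⟨H.hom, hga, fun x t h0 => ?_⟩
  have h1 := key x t h0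
  have h2 := key x ((starRingEnd ℂ) t) (by
    have := cev_conj g (cv x + t • cv a)
    rw [h0, map_zero] at this
    rw [← this]
    congr 1
    ext i
    simp [cv])
  simp at h1 h2
  linarith

theorem HP.IC_mid {n d : ℕ} {g : MvPolynomial (Fin n) ℝ} {e : Fin n → ℝ} (H : HP g e d)
    {a b : Fin n → ℝ} (ha : a ∈ IC g e) (hb : b ∈ IC g e) :
    ∀ τ ∈ Set.Icc (0 : ℝ) 1, (1 - τ) • a + τ • b ∈ IC g e := by
  have Ha := H.garding ha
  have hea : e ∈ IC g a := by
    intro τ hτ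
    have := ha (1 - τ) ⟨by linarith [hτ.2], by linarith [hτ.1]⟩
    rw [sub_sub_cancel, add_comm] at this
    exact this
  have hba : b ∈ IC g a := by
    have := Ha.path (fun τ => (1 - τ) • e + τ • b) (by fun_prop) (by simpa using hea) (by
      intro τ hτ
      have := hb (1 - τ) ⟨by linarith [hτ.2], by linarith [hτ.1]⟩
      rw [sub_sub_cancel, add_comm] at this
      exact this) 1 (by simp)
    simpa using this
  refine H.path (fun τ => (1 - τ) • a + τ • b) (by fun_prop) (by simpa using ha) ?_
  intro τ hτ
  have := hba (1 - τ) ⟨by linarith [hτ.2], by linarith [hτ.1]⟩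
  rw [sub_sub_cancel, add_comm] at this
  exact this

theorem HP.cone_add {n d : ℕ} {g : MvPolynomial (Fin n) ℝ} {e : Fin n → ℝ} (H : HP g e d)
    {a b : Fin n → ℝ} (ha : a ∈ hypCone g e) (hb : b ∈ hypCone g e) : a + b ∈ hypCone g e := by
  refine H.mem_cone fun t ht => ?_
  have h1 := H.add_e_mem_IC ha (t / 2) (by positivity)
  have h2 := H.add_e_mem_IC hb (t / 2) (by positivity)
  have h3 := H.IC_mid h1 h2 (1 / 2) (by norm_num)
  have h4 := (H.mem_IC.mp h3).2
  have : a + b + t • e = (2 : ℝ) • ((1 - 1 / 2 : ℝ) • (a + (t / 2) • e)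
      + (1 / 2 : ℝ) • (b + (t / 2) • e)) := by
    ext i; simp; ring
  rw [this, eval_smul_hom H.hom]
  positivity

/-- real-rootedness along all directions through interior points -/
theorem HP.interior_line {n d : ℕ} {g : MvPolynomial (Fin n) ℝ} {e : Fin n → ℝ} (H : HP g e d)
    {z : Fin n → ℝ} (hz : z ∈ IC g e) (w : Fin n → ℝ) : RealRooted (linePoly g z w) := by
  intro α h0
  rw [cev_line] at h0
  by_contra him
  have hα : α ≠ 0 := by rintro rfl; simp at him
  have h1 : cev g (cv w + α⁻¹ • cv z) = 0 := by
    have : cv w + α⁻¹ • cv z = α⁻¹ • (cv z + α • cv w) := by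
      rw [smul_add, smul_smul, inv_mul_cancel₀ hα, one_smul, add_comm]
    rw [this, cev_smul_hom H.hom, h0, mul_zero]
  have := (H.garding hz).hyp _ _ h1
  rw [Complex.inv_im] at this
  have hn : Complex.normSq α ≠ 0 := by simpa using hα
  field_simp at this
  simp at this
  exact him this

set_option linter.unusedSimpArgs false

/-- monic product with prescribed roots -/
noncomputable def rp (s : Multiset ℝ) : Polynomial ℝ :=
  (s.map (fun r => Polynomial.X - Polynomial.C r)).prod

theorem rp_zero : rp 0 = 1 := by simp [rp]

theorem rp_cons (r : ℝ) (s : Multiset ℝ) :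
    rp (r ::ₘ s) = (Polynomial.X - Polynomial.C r) * rp s := by simp [rp]

theorem rp_im (s : Multiset ℝ) (z : ℂ) :
    (Polynomial.aeval z (Polynomial.derivative (rp s)) *
      (starRingEnd ℂ) (Polynomial.aeval z (rp s))).im * z.im ≤ 0 := by
  induction s using Multiset.induction_on with
  | empty => simp [rp_zero]
  | cons r s ih =>
    rw [rp_cons]
    simp only [Polynomial.derivative_mul, Polynomial.derivative_sub, Polynomial.derivative_X,
      Polynomial.derivative_C, sub_zero, one_mul, map_add, map_mul, map_sub, Polynomial.aeval_X,
      Polynomial.aeval_C]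
    set F := Polynomial.aeval z (rp s)
    set F' := Polynomial.aeval z (Polynomial.derivative (rp s))
    have : ((F + (z - (algebraMap ℝ ℂ) r) * F') *
        (((starRingEnd ℂ) z - (starRingEnd ℂ) ((algebraMap ℝ ℂ) r)) * (starRingEnd ℂ) F)).im * z.im
        = - (F.re ^ 2 + F.im ^ 2) * z.im ^ 2
          + ((z.re - r) ^ 2 + z.im ^ 2) * ((F' * (starRingEnd ℂ) F).im * z.im) := by
      simp
      ring
    rw [this]
    have h1 : 0 ≤ (F.re ^ 2 + F.im ^ 2) * z.im ^ 2 := by positivity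
    have h2 : 0 ≤ ((z.re - r) ^ 2 + z.im ^ 2) := by positivity
    nlinarith

theorem rp_pos (s : Multiset ℝ) (t : ℝ) (hs : ∀ r ∈ s, r < t) :
    0 < (rp s).eval t ∧ 0 ≤ (Polynomial.derivative (rp s)).eval t := by
  induction s using Multiset.induction_on with
  | empty => simp [rp_zero]
  | cons r s ih =>
    obtain ⟨h1, h2⟩ := ih fun r' hr' => hs r' (Multiset.mem_cons_of_mem hr')
    have h3 := hs r (Multiset.mem_cons_self r s)
    rw [rp_cons]
    have h4 : 0 < t - r := by linarith
    simp
    constructor <;> positivity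

theorem rp_laguerre (s : Multiset ℝ) (x : ℝ) :
    0 ≤ (Polynomial.derivative (rp s)).eval x ^ 2 -
      (rp s).eval x * (Polynomial.derivative (Polynomial.derivative (rp s))).eval x ∧
    (s ≠ 0 → (rp s).eval x ≠ 0 → 0 < (Polynomial.derivative (rp s)).eval x ^ 2 -
      (rp s).eval x * (Polynomial.derivative (Polynomial.derivative (rp s))).eval x) := by
  induction s using Multiset.induction_on with
  | empty => simp [rp_zero]
  | cons r s ih =>
    obtain ⟨h1, -⟩ := ih
    rw [rp_cons]
    simp only [Polynomial.derivative_mul, Polynomial.derivative_sub, Polynomial.derivative_X,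
      Polynomial.derivative_C, sub_zero, one_mul, Polynomial.derivative_add, Polynomial.eval_add,
      Polynomial.eval_mul, Polynomial.eval_sub, Polynomial.eval_X, Polynomial.eval_C]
    set F := (rp s).eval x
    set F' := (Polynomial.derivative (rp s)).eval x
    set F'' := (Polynomial.derivative (Polynomial.derivative (rp s))).eval x
    have : (F + (x - r) * F') ^ 2 - (x - r) * F * (F' + (F' + (x - r) * F'')) =
      F ^ 2 + (x - r) ^ 2 * (F' ^ 2 - F * F'') := by ring
    rw [this]
    constructor
    · positivity
    · intro _ hne
      have : F ≠ 0 := right_ne_zero_of_mul hne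
      positivity

theorem rolle_weight (F : Polynomial ℝ) (c s₀ p r : ℝ) (hc : 0 < c) (hp : s₀ ≤ p) (hpr : p < r)
    (h1 : p = s₀ ∨ F.eval p = 0) (h2 : F.eval r = 0) :
    ∃ t, p < t ∧ t < r ∧ c * F.eval t + (t - s₀) * (Polynomial.derivative F).eval t = 0 := by
  have hcont : ContinuousOn (fun t : ℝ => (t - s₀) ^ c * F.eval t) (Set.Icc p r) := by
    apply Continuous.continuousOn
    refine Continuous.mul ?_ F.continuous
    exact (continuous_id.sub continuous_const).rpow_const (fun x => Or.inr hc.le)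
  obtain ⟨t, ht, h0⟩ := exists_hasDerivAt_eq_zero (f := fun t : ℝ => (t - s₀) ^ c * F.eval t)
    (f' := fun t => (c * (t - s₀) ^ (c - 1)) * F.eval t
      + (t - s₀) ^ c * (Polynomial.derivative F).eval t) hpr hcont
    (by
      rw [h2, mul_zero]
      rcases h1 with h | h
      · rw [h, sub_self, Real.zero_rpow hc.ne', zero_mul]
      · rw [h, mul_zero])
    (by
      intro t ht
      have hpos : 0 < t - s₀ := by linarith [ht.1]
      have := ((hasDerivAt_id t).sub_const s₀).rpow_const (p := c) (Or.inl hpos.ne')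
      refine (this.mul (F.hasDerivAt t)).congr_deriv ?_
      simp [one_mul])
  refine ⟨t, ht.1, ht.2, ?_⟩
  have hpos : 0 < t - s₀ := by linarith [ht.1]
  have h3 : (t - s₀) ^ c = (t - s₀) ^ (c - 1) * (t - s₀) := by
    rw [Real.rpow_sub_one hpos.ne']; field_simp
  simp only [h3] at h0
  have h4 : (t - s₀) ^ (c - 1) * (c * F.eval t + (t - s₀) * (Polynomial.derivative F).eval t) = 0 := by
    rw [← h0]; ring
  exact (mul_eq_zero.mp h4).resolve_left (ne_of_gt (Real.rpow_pos_of_pos hpos _))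

/-- one Nuij step -/
noncomputable def nstep {n : ℕ} (l e : Fin n → ℝ) (ε : ℝ) (q : MvPolynomial (Fin n) ℝ) :
    MvPolynomial (Fin n) ℝ :=
  q + ε • ((∑ i, MvPolynomial.C (l i) * MvPolynomial.X i) * dirDeriv e q)

/-- linear form -/
def ell {n : ℕ} (l a : Fin n → ℝ) : ℝ := ∑ i, l i * a i

theorem linePoly_add {n : ℕ} (f g : MvPolynomial (Fin n) ℝ) (a v : Fin n → ℝ) :
    linePoly (f + g) a v = linePoly f a v + linePoly g a v := by simp [linePoly]

theorem linePoly_mul {n : ℕ} (f g : MvPolynomial (Fin n) ℝ) (a v : Fin n → ℝ) :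
    linePoly (f * g) a v = linePoly f a v * linePoly g a v := by simp [linePoly]

theorem dirDeriv_add {n : ℕ} (e : Fin n → ℝ) (f g : MvPolynomial (Fin n) ℝ) :
    dirDeriv e (f + g) = dirDeriv e f + dirDeriv e g := by
  simp [dirDeriv, Finset.sum_add_distrib]

theorem dirDeriv_smul {n : ℕ} (e : Fin n → ℝ) (c : ℝ) (g : MvPolynomial (Fin n) ℝ) :
    dirDeriv e (c • g) = c • dirDeriv e g := by
  simp [dirDeriv, Finset.smul_sum, smul_comm c]

theorem dirDeriv_mul {n : ℕ} (e : Fin n → ℝ) (f g : MvPolynomial (Fin n) ℝ) :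
    dirDeriv e (f * g) = dirDeriv e f * g + f * dirDeriv e g := by
  simp only [dirDeriv, Finset.sum_mul, Finset.mul_sum, ← Finset.sum_add_distrib]
  refine Finset.sum_congr rfl fun i _ => ?_
  simp [pderiv_mul, smul_eq_C_mul]
  ring

theorem dirDeriv_X {n : ℕ} (e : Fin n → ℝ) (j : Fin n) :
    dirDeriv e (X j) = C (e j) := by
  classical
  simp only [dirDeriv, pderiv_X]
  rw [Finset.sum_eq_single j]
  · simp [smul_eq_C_mul]
  · intro i _ hi
    simp [Pi.single_apply, hi.symm]
  · simp

theorem dirDeriv_C {n : ℕ} (e : Fin n → ℝ) (c : ℝ) :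
    dirDeriv e (C c) = 0 := by simp [dirDeriv]

theorem linePoly_dirDeriv {n : ℕ} (g : MvPolynomial (Fin n) ℝ) (a e : Fin n → ℝ) :
    linePoly (dirDeriv e g) a e = Polynomial.derivative (linePoly g a e) := by
  induction g using MvPolynomial.induction_on with
  | C r => rw [dirDeriv_C]; simp [linePoly, ← Polynomial.C_eq_algebraMap]
  | add p q hp hq => rw [dirDeriv_add, linePoly_add, linePoly_add, hp, hq, Polynomial.derivative_add]
  | mul_X p i hp =>
    rw [dirDeriv_mul, linePoly_add, linePoly_mul, linePoly_mul, linePoly_mul, hp,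
      Polynomial.derivative_mul, dirDeriv_X]
    congr 2
    simp [linePoly, ← Polynomial.C_eq_algebraMap]

theorem linePoly_nstep {n : ℕ} (l e : Fin n → ℝ) (ε : ℝ) (q : MvPolynomial (Fin n) ℝ)
    (a : Fin n → ℝ) : linePoly (nstep l e ε q) a e = linePoly q a e +
      Polynomial.C ε * ((Polynomial.C (ell l a) + Polynomial.C (ell l e) * Polynomial.X) *
        Polynomial.derivative (linePoly q a e)) := by
  have : linePoly (∑ i, MvPolynomial.C (l i) * MvPolynomial.X i) a e =
      Polynomial.C (ell l a) + Polynomial.C (ell l e) * Polynomial.X := by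
    simp [linePoly, ell, ← Polynomial.C_eq_algebraMap, mul_add, Finset.sum_add_distrib,
      Finset.sum_mul, mul_assoc]
  rw [nstep, linePoly_add, smul_eq_C_mul, linePoly_mul, linePoly_mul, linePoly_dirDeriv, this]
  congr 2
  simp [linePoly, ← Polynomial.C_eq_algebraMap]

theorem dirDeriv_hom {n d : ℕ} {g : MvPolynomial (Fin n) ℝ} (hg : g.IsHomogeneous (d + 1))
    (e : Fin n → ℝ) : (dirDeriv e g).IsHomogeneous d := by
  refine IsHomogeneous.sum _ _ _ fun i _ => ?_
  rw [smul_eq_C_mul]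
  simpa using (isHomogeneous_C (Fin n) (e i)).mul (hg.pderiv (i := i))

theorem nstep_hom {n d : ℕ} {g : MvPolynomial (Fin n) ℝ} (hg : g.IsHomogeneous (d + 1))
    (l e : Fin n → ℝ) (ε : ℝ) : (nstep l e ε g).IsHomogeneous (d + 1) := by
  refine hg.add ?_
  rw [smul_eq_C_mul]
  have h1 : (∑ i, MvPolynomial.C (l i) * MvPolynomial.X i : MvPolynomial (Fin n) ℝ).IsHomogeneous 1 :=
    IsHomogeneous.sum _ _ _ fun i _ => by
      simpa using (isHomogeneous_C (Fin n) (l i)).mul (isHomogeneous_X ℝ i)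
  have := (isHomogeneous_C (Fin n) ε).mul (h1.mul (dirDeriv_hom hg e))
  rw [show 0 + (1 + d) = d + 1 by ring] at this
  exact this

theorem HP.factor' {n d : ℕ} {g : MvPolynomial (Fin n) ℝ} {e : Fin n → ℝ} (H : HP g e d)
    (a : Fin n → ℝ) : ∃ s : Multiset ℝ, s.card = d ∧
      linePoly g a e = Polynomial.C (eval e g) * rp s := H.factor a

theorem HP.root_of_not_mem {n d : ℕ} {g : MvPolynomial (Fin n) ℝ} {e : Fin n → ℝ} (H : HP g e d)
    {a : Fin n → ℝ} (ha : a ∉ hypCone g e) : ∃ r : ℝ, 0 < r ∧ (linePoly g a e).eval r = 0 := by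
  by_contra hcon
  push Not at hcon
  apply ha
  intro z hz
  rw [aeval_linePoly_neg] at hz
  have him := H.hyp _ _ hz
  simp at him
  refine ⟨him, ?_⟩
  by_contra hlt
  push Not at hlt
  apply hcon (-z.re) (by linarith)
  have hzr : z = ((z.re : ℝ) : ℂ) := by apply Complex.ext <;> simp [him]
  rw [hzr, ← Complex.ofReal_neg, ← cv_smul, ← cv_add, cev_cv] at hz
  rw [linePoly_eval]
  exact_mod_cast hz

theorem HP.eval_ne {n d : ℕ} {g : MvPolynomial (Fin n) ℝ} {e : Fin n → ℝ} (H : HP g e d)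
    {a : Fin n → ℝ} (ha : a ∈ hypCone g e) {t : ℝ} (ht : 0 < t) : (linePoly g a e).eval t ≠ 0 := by
  rw [linePoly_eval]
  exact (H.cone_pos ha t ht).ne'

theorem rp_eval_mem (s : Multiset ℝ) {r : ℝ} (hr : r ∈ s) : (rp s).eval r = 0 := by
  rw [rp, Polynomial.eval_multiset_prod, Multiset.prod_eq_zero]
  simpa using ⟨r, hr, sub_self r⟩

/-- on the cone the polynomial is positive and the derivative nonnegative, beyond the roots -/
theorem HP.deriv_nonneg {n d : ℕ} {g : MvPolynomial (Fin n) ℝ} {e : Fin n → ℝ} (H : HP g e d)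
    {a : Fin n → ℝ} (ha : a ∈ hypCone g e) {t : ℝ} (ht : 0 ≤ t)
    (h0 : (linePoly g a e).eval t ≠ 0) :
    0 < (linePoly g a e).eval t ∧ 0 ≤ (Polynomial.derivative (linePoly g a e)).eval t := by
  obtain ⟨s, hs, hf⟩ := H.factor' a
  have hr : ∀ r ∈ s, r < t := by
    intro r hr
    have h1 : (linePoly g a e).eval r = 0 := by
      rw [hf, Polynomial.eval_mul, rp_eval_mem s hr, mul_zero]
    have h2 : r ≤ 0 := by
      by_contra h
      exact H.eval_ne ha (not_le.mp h) h1
    rcases (h2.trans ht).eq_or_lt with h | h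
    · rw [← h] at h0; exact absurd h1 h0
    · exact h
  obtain ⟨h1, h2⟩ := rp_pos s t hr
  rw [hf]
  have := H.pos
  simp
  constructor <;> positivity

/-- The invariant along the Nuij iteration. -/
structure NI {n : ℕ} (g : MvPolynomial (Fin n) ℝ) (l e : Fin n → ℝ) (d N : ℕ) : Prop where
  hp : HP g e d
  lpos : ∀ a ∈ hypCone g e, a ≠ 0 → 0 < ell l a
  mult : ∀ a ∈ hypCone g e, a ≠ 0 → ∀ k, Polynomial.X ^ k ∣ linePoly g a e → k ≤ N

theorem HP.e_mem {n d : ℕ} {g : MvPolynomial (Fin n) ℝ} {e : Fin n → ℝ} (H : HP g e d) :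
    e ∈ hypCone g e := by
  simpa using H.cone_add_e H.zero_mem 1 zero_le_one

theorem HP.e_ne {n d : ℕ} {g : MvPolynomial (Fin n) ℝ} {e : Fin n → ℝ} (H : HP g e (d + 1)) :
    e ≠ 0 := by
  rintro rfl
  have := H.pos
  have h := eval_smul_hom H.hom 0 0
  simp at h
  simp [h] at this

theorem HP.eval_zero {n d : ℕ} {g : MvPolynomial (Fin n) ℝ} {e : Fin n → ℝ} (H : HP g e (d + 1)) :
    eval 0 g = 0 := by
  have h := eval_smul_hom H.hom 0 0
  rw [zero_smul, zero_pow (Nat.succ_ne_zero d), zero_mul] at h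
  exact h

theorem ell_add {n : ℕ} (l a b : Fin n → ℝ) : ell l (a + b) = ell l a + ell l b := by
  simp [ell, mul_add, Finset.sum_add_distrib]

theorem ell_smul {n : ℕ} (l a : Fin n → ℝ) (c : ℝ) : ell l (c • a) = c * ell l a := by
  simp only [ell, Pi.smul_apply, smul_eq_mul, Finset.mul_sum]
  exact Finset.sum_congr rfl fun i _ => by ring

theorem nstep_eval {n : ℕ} (l e : Fin n → ℝ) (ε : ℝ) (q : MvPolynomial (Fin n) ℝ)
    (a : Fin n → ℝ) (t : ℝ) : (linePoly (nstep l e ε q) a e).eval t = (linePoly q a e).eval t +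
      ε * ((ell l a + ell l e * t) * (Polynomial.derivative (linePoly q a e)).eval t) := by
  rw [linePoly_nstep]; simp

theorem NI.step_hp {n d N : ℕ} {f : MvPolynomial (Fin n) ℝ} {l e : Fin n → ℝ}
    (I : NI f l e (d + 1) N) {ε : ℝ} (hε : 0 < ε) : HP (nstep l e ε f) e (d + 1) := by
  have hβ : 0 < ell l e := I.lpos e I.hp.e_mem I.hp.e_ne
  refine ⟨nstep_hom I.hp.hom l e ε, ?_, ?_⟩
  · have := nstep_eval l e ε f 0 1
    rw [linePoly_eval, linePoly_eval] at this
    simp only [one_smul, zero_add] at this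
    rw [this]
    have h1 := (I.hp.deriv_nonneg I.hp.zero_mem zero_le_one (by
      rw [linePoly_eval]; simpa using I.hp.pos.ne')).2
    have h2 := I.hp.pos
    have : ell l 0 = 0 := by simp [ell]
    rw [this]
    have : 0 ≤ ε * ((0 + ell l e * 1) * (Polynomial.derivative (linePoly f 0 e)).eval 1) := by
      positivity
    linarith
  · intro a z hz
    rw [← cev_line, linePoly_nstep] at hz
    by_contra him
    obtain ⟨s, hs, hf⟩ := I.hp.factor' a
    have hne : Polynomial.aeval z (linePoly f a e) ≠ 0 := by
      rw [cev_line]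
      intro h
      exact him (I.hp.hyp a z h)
    have h1 := rp_im s z
    rw [hf] at hz hne
    simp only [map_mul, Polynomial.aeval_C, Polynomial.derivative_mul, Polynomial.derivative_C,
      zero_mul, zero_add, map_add, Polynomial.aeval_X] at hz hne
    set F := Polynomial.aeval z (rp s)
    set F' := Polynomial.aeval z (Polynomial.derivative (rp s))
    have hc : (algebraMap ℝ ℂ) (eval e f) ≠ 0 := by
      simpa using I.hp.pos.ne'
    have h2 : F = - ((ε : ℂ) * (((ell l a : ℝ) : ℂ) + ((ell l e : ℝ) : ℂ) * z) * F') := by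
      have : (algebraMap ℝ ℂ) (eval e f) *
          (F + (ε : ℂ) * (((ell l a : ℝ) : ℂ) + ((ell l e : ℝ) : ℂ) * z) * F') = 0 := by
        rw [← hz]; simp; ring
      have := (mul_eq_zero.mp this).resolve_left hc
      linear_combination this
    have h3 : (F' * (starRingEnd ℂ) F).im * z.im
        = ε * ell l e * z.im ^ 2 * (F'.re ^ 2 + F'.im ^ 2) := by
      rw [h2]
      simp
      ring
    rw [h3] at h1
    have h4 : 0 < F'.re ^ 2 + F'.im ^ 2 := by
      have : F' ≠ 0 := by
        intro h
        apply hne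
        rw [h2, h]; simp
      by_contra hle
      apply this
      have h5 : F'.re = 0 := by nlinarith [sq_nonneg F'.re, sq_nonneg F'.im]
      have h6 : F'.im = 0 := by nlinarith [sq_nonneg F'.re, sq_nonneg F'.im]
      apply Complex.ext <;> simp [h5, h6]
    have : 0 < ε * ell l e * z.im ^ 2 * (F'.re ^ 2 + F'.im ^ 2) := by positivity
    linarith

theorem NI.lnonneg {n d N : ℕ} {f : MvPolynomial (Fin n) ℝ} {l e : Fin n → ℝ}
    (I : NI f l e d N) {a : Fin n → ℝ} (ha : a ∈ hypCone f e) : 0 ≤ ell l a := by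
  by_cases h : a = 0
  · simp [h, ell]
  · exact (I.lpos a ha h).le

theorem NI.step_sub {n d N : ℕ} {f : MvPolynomial (Fin n) ℝ} {l e : Fin n → ℝ}
    (I : NI f l e (d + 1) N) {ε : ℝ} (hε : 0 < ε) : hypCone f e ⊆ hypCone (nstep l e ε f) e := by
  intro a ha
  have hβ : 0 < ell l e := I.lpos e I.hp.e_mem I.hp.e_ne
  refine (I.step_hp hε).mem_cone fun t ht => ?_
  rw [← linePoly_eval, nstep_eval]
  obtain ⟨h1, h2⟩ := I.hp.deriv_nonneg ha ht.le (I.hp.eval_ne ha ht)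
  have := I.lnonneg ha
  positivity

theorem NI.step_rolle {n d N : ℕ} {f : MvPolynomial (Fin n) ℝ} {l e : Fin n → ℝ}
    (I : NI f l e (d + 1) N) {ε : ℝ} (hε : 0 < ε) {a : Fin n → ℝ}
    (ha : a ∈ hypCone (nstep l e ε f) e) {p r : ℝ} (hp0 : 0 ≤ p) (hp : - ell l a / ell l e ≤ p)
    (hpr : p < r) (h1 : p = - ell l a / ell l e ∨ (linePoly f a e).eval p = 0)
    (h2 : (linePoly f a e).eval r = 0) : False := by
  have hβ : 0 < ell l e := I.lpos e I.hp.e_mem I.hp.e_ne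
  obtain ⟨t, h3, h4, h5⟩ := rolle_weight (linePoly f a e) (1 / (ε * ell l e)) _ p r (by positivity)
    hp hpr h1 h2
  refine (I.step_hp hε).eval_ne ha (lt_of_le_of_lt hp0 h3) ?_
  rw [nstep_eval]
  have : (linePoly f a e).eval t +
      ε * ((ell l a + ell l e * t) * (Polynomial.derivative (linePoly f a e)).eval t) =
      ε * ell l e * (1 / (ε * ell l e) * (linePoly f a e).eval t + (t - - ell l a / ell l e) *
        (Polynomial.derivative (linePoly f a e)).eval t) := by
    field_simp
    ring
  rw [this, h5, mul_zero]

theorem NI.step_lpos {n d N : ℕ} {f : MvPolynomial (Fin n) ℝ} {l e : Fin n → ℝ}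
    (I : NI f l e (d + 1) N) {ε : ℝ} (hε : 0 < ε) {a : Fin n → ℝ}
    (ha : a ∈ hypCone (nstep l e ε f) e) (ha0 : a ≠ 0) : 0 < ell l a := by
  have hβ : 0 < ell l e := I.lpos e I.hp.e_mem I.hp.e_ne
  by_contra hle
  push Not at hle
  set s₀ := - ell l a / ell l e with hs₀
  have hs0 : 0 ≤ s₀ := div_nonneg (by linarith) hβ.le
  have hl0 : ell l (a + s₀ • e) = 0 := by
    rw [ell_add, ell_smul, hs₀]; field_simp; ring
  by_cases hm : a + s₀ • e ∈ hypCone f e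
  · have h0 : a + s₀ • e = 0 := by
      by_contra h
      have := I.lpos _ hm h
      linarith
    rcases hs0.eq_or_lt with h | h
    · rw [← h] at h0; simp at h0; exact ha0 h0
    · have := (I.step_hp hε).cone_pos ha s₀ h
      rw [h0, (I.step_hp hε).eval_zero] at this
      exact lt_irrefl _ this
  · obtain ⟨r, hr, h0⟩ := I.hp.root_of_not_mem hm
    refine I.step_rolle hε ha hs0 le_rfl (r := s₀ + r) (by linarith) (Or.inl rfl) ?_
    rw [linePoly_eval] at h0 ⊢
    rw [add_smul, ← add_assoc]
    exact h0

theorem NI.step_mult {n d N : ℕ} {f : MvPolynomial (Fin n) ℝ} {l e : Fin n → ℝ}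
    (I : NI f l e (d + 1) N) {ε : ℝ} (hε : 0 < ε) {a : Fin n → ℝ}
    (ha : a ∈ hypCone (nstep l e ε f) e) (ha0 : a ≠ 0) (k : ℕ)
    (hk : Polynomial.X ^ k ∣ linePoly (nstep l e ε f) a e) : k ≤ max 1 (N - 1) := by
  have hβ : 0 < ell l e := I.lpos e I.hp.e_mem I.hp.e_ne
  have hα := I.step_lpos hε ha ha0
  by_contra hkk
  have hk1 : 2 ≤ k := by omega
  have hkN : N - 1 < k := by omega
  have h2 : Polynomial.X ^ 2 ∣ linePoly (nstep l e ε f) a e := (pow_dvd_pow _ hk1).trans hk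
  have hG0 : (linePoly (nstep l e ε f) a e).eval 0 = 0 := by
    obtain ⟨q, hq⟩ := h2
    rw [hq]; simp
  have hG1 : (Polynomial.derivative (linePoly (nstep l e ε f) a e)).eval 0 = 0 := by
    obtain ⟨q, hq⟩ := h2
    rw [hq]; simp
  have hG0' := hG0
  rw [nstep_eval] at hG0
  by_cases hm : a ∈ hypCone f e
  · by_cases hf0 : (linePoly f a e).eval 0 = 0
    · -- multiplicity drops
      obtain ⟨q, hq, hqd⟩ := Polynomial.exists_eq_pow_rootMultiplicity_mul_and_not_dvd
        (linePoly f a e) (I.hp.line_ne a) 0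
      rw [map_zero, sub_zero] at hq hqd
      generalize (linePoly f a e).rootMultiplicity 0 = m at hq
      have hmN : m ≤ N := I.mult a hm ha0 m ⟨q, hq⟩
      have hm1 : m ≠ 0 := by
        intro h
        rw [h, pow_zero, one_mul] at hq
        apply hqd
        rw [Polynomial.X_dvd_iff, ← hq, Polynomial.coeff_zero_eq_eval_zero]
        exact hf0
      obtain ⟨m', rfl⟩ : ∃ m', m = m' + 1 := ⟨m - 1, by omega⟩
      have hG : linePoly (nstep l e ε f) a e = Polynomial.X ^ m' * (Polynomial.X * q +
          Polynomial.C ε * ((Polynomial.C (ell l a) + Polynomial.C (ell l e) * Polynomial.X) *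
          (Polynomial.C ((m' : ℝ) + 1) * q + Polynomial.X * Polynomial.derivative q))) := by
        rw [linePoly_nstep, hq, Polynomial.derivative_mul, Polynomial.derivative_X_pow]
        simp only [Nat.add_sub_cancel, Nat.cast_add, Nat.cast_one]
        ring
      have : Polynomial.X ^ (m' + 1) ∣ linePoly (nstep l e ε f) a e :=
        (pow_dvd_pow _ (by omega)).trans hk
      rw [hG, pow_succ] at this
      have h3 := (mul_dvd_mul_iff_left (pow_ne_zero m' Polynomial.X_ne_zero)).mp this
      rw [Polynomial.X_dvd_iff, Polynomial.coeff_zero_eq_eval_zero] at h3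
      simp at h3
      rw [Polynomial.X_dvd_iff, Polynomial.coeff_zero_eq_eval_zero] at hqd
      rcases h3 with h | h | h | h
      · linarith
      · linarith
      · have : (0 : ℝ) < m' + 1 := by positivity
        linarith
      · exact hqd h
    · obtain ⟨h3, h4⟩ := I.hp.deriv_nonneg hm le_rfl hf0
      have : 0 ≤ ε * ((ell l a + ell l e * 0) *
        (Polynomial.derivative (linePoly f a e)).eval 0) := by
        rw [mul_zero, add_zero]; positivity
      linarith
  · obtain ⟨r, hr, h0⟩ := I.hp.root_of_not_mem hm
    have hneg : - ell l a / ell l e ≤ 0 := div_nonpos_of_nonpos_of_nonneg (by linarith) hβ.le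
    by_cases hf0 : (linePoly f a e).eval 0 = 0
    · exact I.step_rolle hε ha le_rfl hneg hr (Or.inr hf0) h0
    · obtain ⟨s, hs, hf⟩ := I.hp.factor' a
      have hL := I.hp.pos
      have h3 := (rp_laguerre s 0).2 (by
        intro h; rw [h] at hs; simp at hs) (by
        intro h; apply hf0; rw [hf]; simp [h])
      rw [linePoly_nstep] at hG1
      rw [hf] at hG0 hG1 hf0
      simp at hG0 hG1 hf0
      set F := (rp s).eval 0
      set F' := (Polynomial.derivative (rp s)).eval 0
      set F'' := (Polynomial.derivative (Polynomial.derivative (rp s))).eval 0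
      set L := eval e f
      have e1 : F = - (ε * ell l a * F') := by
        have : L * (F + ε * ell l a * F') = 0 := by linear_combination hG0
        have := (mul_eq_zero.mp this).resolve_left hL.ne'
        linarith
      have e2 : F' + ε * ell l e * F' + ε * ell l a * F'' = 0 := by
        have : L * (F' + ε * ell l e * F' + ε * ell l a * F'') = 0 := by linear_combination hG1
        exact (mul_eq_zero.mp this).resolve_left hL.ne'
      have e3 : F' ^ 2 - F * F'' = - (ε * ell l e) * F' ^ 2 := by
        rw [e1]; linear_combination F' * e2
      rw [e3] at h3
      have : 0 ≤ ε * ell l e * F' ^ 2 := by positivity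
      linarith

theorem NI.step {n d N : ℕ} {f : MvPolynomial (Fin n) ℝ} {l e : Fin n → ℝ}
    (I : NI f l e (d + 1) N) {ε : ℝ} (hε : 0 < ε) :
    NI (nstep l e ε f) l e (d + 1) (max 1 (N - 1)) :=
  ⟨I.step_hp hε, fun _ ha ha0 => I.step_lpos hε ha ha0, fun _ ha ha0 k => I.step_mult hε ha ha0 k⟩

theorem NI.iter {n d : ℕ} {l e : Fin n → ℝ}
    {ε : ℝ} (hε : 0 < ε) (j : ℕ) : ∀ {f : MvPolynomial (Fin n) ℝ} {N : ℕ}, NI f l e (d + 1) N →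
    NI ((nstep l e ε)^[j] f) l e (d + 1) (max 1 (N - j)) ∧
      hypCone f e ⊆ hypCone ((nstep l e ε)^[j] f) e := by
  induction j with
  | zero =>
    intro f N I
    refine ⟨⟨I.hp, I.lpos, fun a ha ha0 k hk => ?_⟩, subset_rfl⟩
    have := I.mult a ha ha0 k hk
    simp; omega
  | succ j ih =>
    intro f N I
    obtain ⟨h1, h2⟩ := ih (I.step hε)
    rw [Function.iterate_succ_apply]
    refine ⟨⟨h1.hp, h1.lpos, fun a ha ha0 k hk => ?_⟩, (I.step_sub hε).trans h2⟩
    have := h1.mult a ha ha0 k hk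
    simp at this ⊢; omega

theorem NI.start {n d : ℕ} {f : MvPolynomial (Fin n) ℝ} {l e : Fin n → ℝ} (H : HP f e d)
    (hl : ∀ a ∈ hypCone f e, a ≠ 0 → 0 < ell l a) : NI f l e d d := by
  refine ⟨H, hl, fun a _ _ k hk => ?_⟩
  have := Polynomial.natDegree_le_of_dvd hk (H.line_ne a)
  rw [Polynomial.natDegree_X_pow] at this
  exact this.trans (lineK_natDegree_le H.hom a e)

theorem HP.frontier {n d : ℕ} {g : MvPolynomial (Fin n) ℝ} {e : Fin n → ℝ} (H : HP g e d)
    {a : Fin n → ℝ} (ha : a ∈ frontier (hypCone g e)) : a ∈ hypCone g e ∧ eval a g = 0 := by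
  have h1 : a ∈ hypCone g e := H.isClosed.frontier_subset ha
  refine ⟨h1, ?_⟩
  by_contra h0
  have h2 := (H.deriv_nonneg h1 le_rfl (t := 0) (by rw [linePoly_eval]; simpa using h0)).1
  rw [linePoly_eval, zero_smul, add_zero] at h2
  have h3 : a ∈ IC g e := H.mem_IC.mpr ⟨h1, h2⟩
  have h4 : IC g e ⊆ interior (hypCone g e) :=
    interior_maximal (fun x hx => (H.mem_IC.mp hx).1) (IC.isOpen g e)
  exact ha.2 (h4 h3)

theorem poly_coeff_one (p : Polynomial ℝ) : p.coeff 1 = (Polynomial.derivative p).eval 0 := by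
  rw [← Polynomial.coeff_zero_eq_eval_zero, Polynomial.coeff_derivative]; simp

theorem NI.coeff_one_pos {n d : ℕ} {g : MvPolynomial (Fin n) ℝ} {l e : Fin n → ℝ}
    (I : NI g l e d 1) {a : Fin n → ℝ} (ha : a ∈ hypCone g e) (ha0 : a ≠ 0)
    (h0 : eval a g = 0) : 0 < (linePoly g a e).coeff 1 := by
  have h1 : (linePoly g a e).coeff 0 = 0 := by
    rw [Polynomial.coeff_zero_eq_eval_zero, linePoly_eval]; simpa using h0
  refine lt_of_le_of_ne ?_ ?_
  · rw [poly_coeff_one]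
    have hc : Filter.Tendsto (fun t => (Polynomial.derivative (linePoly g a e)).eval t)
        (nhdsWithin (0 : ℝ) (Set.Ioi 0)) (nhds ((Polynomial.derivative (linePoly g a e)).eval 0)) :=
      ((Polynomial.derivative (linePoly g a e)).continuous.tendsto 0).mono_left nhdsWithin_le_nhds
    refine ge_of_tendsto hc ?_
    filter_upwards [self_mem_nhdsWithin] with t ht
    exact (I.hp.deriv_nonneg ha (le_of_lt ht) (I.hp.eval_ne ha ht)).2
  · intro h2
    have : Polynomial.X ^ 2 ∣ linePoly g a e := by
      rw [Polynomial.X_pow_dvd_iff]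
      intro m hm
      interval_cases m
      · exact h1
      · exact h2.symm
    have := I.mult a ha ha0 2 this
    omega

theorem coeff_scale {n : ℕ} (G : MvPolynomial (Fin n) ℝ) (e : Fin n → ℝ) (m : ℕ) :
    (MvPolynomial.aeval (fun i => Polynomial.C (e i) * Polynomial.X) G : Polynomial ℝ).coeff m
      = eval e (homogeneousComponent m G) := by
  induction G using MvPolynomial.induction_on' with
  | add p q hp hq => simp [hp, hq]
  | monomial σ c =>
    have h1 : (MvPolynomial.aeval (fun i => Polynomial.C (e i) * Polynomial.X) (monomial σ c) :
        Polynomial ℝ) = Polynomial.C (eval e (monomial σ c)) * Polynomial.X ^ σ.degree := by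
      rw [aeval_monomial, eval_monomial, Finsupp.prod, Finsupp.prod, Finsupp.degree_apply]
      simp only [mul_pow, Finset.prod_mul_distrib, Finset.prod_pow_eq_pow_sum, map_mul, map_prod,
        map_pow, Polynomial.algebraMap_eq]
      simp [mul_assoc]
    rw [h1, Polynomial.coeff_C_mul, Polynomial.coeff_X_pow]
    have h2 : (monomial σ c : MvPolynomial (Fin n) ℝ).IsHomogeneous σ.degree :=
      isHomogeneous_monomial c rfl
    rw [homogeneousComponent_of_mem h2]
    split_ifs <;> simp

theorem linePoly_coeff_hom {n : ℕ} (g : MvPolynomial (Fin n) ℝ) (a e : Fin n → ℝ) (m : ℕ) :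
    (linePoly g a e).coeff m = eval e (homogeneousComponent m
      (MvPolynomial.aeval (fun i => MvPolynomial.X i + MvPolynomial.C (a i)) g)) := by
  rw [← coeff_scale]
  congr 1
  unfold linePoly
  rw [← AlgHom.comp_apply, comp_aeval]
  congr 1
  congr 1
  ext i
  simp [add_comm]

theorem NI.multAt_eq {n d : ℕ} {g : MvPolynomial (Fin n) ℝ} {l e : Fin n → ℝ}
    (I : NI g l e d 1) {a : Fin n → ℝ} (ha : a ∈ frontier (hypCone g e)) (ha0 : a ≠ 0) :
    multAt g a = 1 := by
  obtain ⟨h1, h2⟩ := I.hp.frontier ha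
  have h3 := I.coeff_one_pos h1 ha0 h2
  rw [linePoly_coeff_hom] at h3
  have h4 : (linePoly g a e).coeff 0 = 0 := by
    rw [Polynomial.coeff_zero_eq_eval_zero, linePoly_eval]; simpa using h2
  rw [linePoly_coeff_hom, homogeneousComponent_zero, eval_C] at h4
  unfold multAt
  apply le_antisymm
  · apply Nat.sInf_le
    intro h
    rw [h] at h3
    simp at h3
  · apply le_csInf
    · refine ⟨1, fun h => ?_⟩
      rw [h] at h3
      simp at h3
    · intro m hm
      by_contra hlt
      have : m = 0 := by omega
      subst this
      apply hm
      rw [homogeneousComponent_zero, h4, C_0]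

/-- The operator `ℓ ∂_e`. -/
noncomputable def nop {n : ℕ} (l e : Fin n → ℝ) : Module.End ℝ (MvPolynomial (Fin n) ℝ) where
  toFun q := (∑ i, MvPolynomial.C (l i) * MvPolynomial.X i) * dirDeriv e q
  map_add' p q := by rw [dirDeriv_add, mul_add]
  map_smul' c q := by rw [dirDeriv_smul]; simp

theorem nstep_iter {n : ℕ} (l e : Fin n → ℝ) (ε : ℝ) (d : ℕ) (h : MvPolynomial (Fin n) ℝ) :
    (nstep l e ε)^[d] h = ∑ m ∈ Finset.range (d + 1),
      (ε ^ m * (d.choose m : ℝ)) • ((nop l e) ^ m) h := by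
  have h1 : nstep l e ε = ⇑(ε • nop l e + 1) := by
    ext1 q
    simp [nstep, nop, add_comm]
  rw [h1, ← Module.End.coe_pow, (Commute.one_right _).add_pow, LinearMap.sum_apply]
  refine Finset.sum_congr rfl fun m _ => ?_
  rw [one_pow, mul_one, smul_pow, ← nsmul_eq_mul', LinearMap.smul_apply, LinearMap.smul_apply,
    mul_smul, smul_comm, ← Nat.cast_smul_eq_nsmul ℝ]

theorem nstep_zero {n : ℕ} (l e : Fin n → ℝ) (d : ℕ) (h : MvPolynomial (Fin n) ℝ) :
    (nstep l e 0)^[d] h = h := by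
  have : nstep l e 0 = id := by ext1 q; simp [nstep]
  rw [this, Function.iterate_id, id]

theorem nstep_coeff_cont {n : ℕ} (l e : Fin n → ℝ) (d : ℕ) (h : MvPolynomial (Fin n) ℝ)
    (mo : Fin n →₀ ℕ) : Continuous fun ε : ℝ => coeff mo ((nstep l e ε)^[d] h) := by
  simp only [nstep_iter, coeff_sum, coeff_smul]
  fun_prop

theorem nstep_eval_cont {n : ℕ} (l e : Fin n → ℝ) (d : ℕ) (h : MvPolynomial (Fin n) ℝ) :
    Continuous fun z : ℝ × (Fin n → ℝ) => eval z.2 ((nstep l e z.1)^[d] h) := by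
  simp only [nstep_iter, map_sum, smul_eval]
  refine continuous_finsetSum _ fun m _ => ?_
  have := (MvPolynomial.continuous_eval (((nop l e) ^ m) h)).comp
    (continuous_snd (X := ℝ) (Y := Fin n → ℝ))
  have h2 : Continuous fun z : ℝ × (Fin n → ℝ) => z.1 ^ m * (d.choose m : ℝ) := by fun_prop
  exact h2.mul this

theorem deriv_line_eval {n : ℕ} (g : MvPolynomial (Fin n) ℝ) (x e : Fin n → ℝ) (t : ℝ) :
    (Polynomial.derivative (linePoly g x e)).eval t = eval (x + t • e) (dirDeriv e g) := by
  rw [← linePoly_dirDeriv, linePoly_eval]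

theorem coeff_one_dirDeriv {n : ℕ} (g : MvPolynomial (Fin n) ℝ) (x e : Fin n → ℝ) :
    (linePoly g x e).coeff 1 = eval x (dirDeriv e g) := by
  rw [poly_coeff_one, deriv_line_eval]; simp

/-- near a smooth cone point, nonnegativity of the polynomial implies membership -/
theorem HP.local_mem {n d : ℕ} {g : MvPolynomial (Fin n) ℝ} {e : Fin n → ℝ} (H : HP g e d)
    {u : Fin n → ℝ} (hu : u ∈ hypCone g e) (hD : 0 < eval u (dirDeriv e g)) :
    ∃ ρ > 0, ∀ x ∈ Metric.ball u ρ, 0 ≤ eval x g → x ∈ hypCone g e := by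
  have hc : Continuous fun z : (Fin n → ℝ) × ℝ => eval (z.1 + z.2 • e) (dirDeriv e g) :=
    (MvPolynomial.continuous_eval _).comp (by fun_prop)
  have h1 : ∀ᶠ z : (Fin n → ℝ) × ℝ in nhds (u, 0), 0 < eval (z.1 + z.2 • e) (dirDeriv e g) :=
    hc.continuousAt.eventually (lt_mem_nhds (by simpa using hD))
  obtain ⟨T, hT, h2⟩ := Metric.eventually_nhds_iff.mp h1
  have h3 : ∀ᶠ x in nhds u, x + (T / 2) • e ∈ IC g e := by
    have hc2 : Continuous fun x : Fin n → ℝ => x + (T / 2) • e := by fun_prop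
    exact hc2.continuousAt.eventually ((IC.isOpen g e).mem_nhds
      (H.add_e_mem_IC hu _ (by positivity)))
  obtain ⟨ρ, hρ, h4⟩ := Metric.eventually_nhds_iff.mp h3
  refine ⟨min ρ T, by positivity, fun x hx h0 => H.mem_cone fun t ht => ?_⟩
  rw [Metric.mem_ball, lt_min_iff] at hx
  have hx1 := h4 hx.1
  rcases le_or_gt t (T / 2) with h | h
  · have hmono : StrictMonoOn (fun t => (linePoly g x e).eval t) (Set.Icc 0 (T / 2)) := by
      apply strictMonoOn_of_deriv_pos (convex_Icc _ _) (Polynomial.continuous _).continuousOn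
      intro s hs
      rw [interior_Icc] at hs
      rw [Polynomial.deriv, deriv_line_eval]
      refine h2 (y := (x, s)) ?_
      rw [Prod.dist_eq, max_lt_iff]
      refine ⟨hx.2, ?_⟩
      rw [Real.dist_eq, sub_zero, abs_of_pos hs.1]
      linarith [hs.2]
    have := hmono (a := 0) (b := t) ⟨le_rfl, by positivity⟩ ⟨ht.le, h⟩ ht
    simp only [linePoly_eval, zero_smul, add_zero] at this
    linarith
  · have := H.cone_pos (H.mem_IC.mp hx1).1 (t - T / 2) (by linarith)
    rwa [add_assoc, ← add_smul, add_sub_cancel] at this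

theorem NI.dir_pos {n d : ℕ} {g : MvPolynomial (Fin n) ℝ} {l e : Fin n → ℝ}
    (I : NI g l e d 1) {a : Fin n → ℝ} (ha : a ∈ hypCone g e) (ha0 : a ≠ 0)
    (h0 : eval a g = 0) : 0 < eval a (dirDeriv e g) := by
  rw [← coeff_one_dirDeriv]; exact I.coeff_one_pos ha ha0 h0

theorem NI.no_line {n d N : ℕ} {g : MvPolynomial (Fin n) ℝ} {l e : Fin n → ℝ}
    (I : NI g l e d N) {u w : Fin n → ℝ} (hw : w ≠ 0) (h : ∀ α : ℝ, u + α • w ∈ hypCone g e) :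
    False := by
  have h1 : ∀ α : ℝ, 0 ≤ ell l u + α * ell l w := by
    intro α
    have := I.lnonneg (h α)
    rwa [ell_add, ell_smul] at this
  have h2 : ell l w = 0 := by
    by_contra hne
    have := h1 (-(ell l u + 1) / ell l w)
    rw [div_mul_cancel₀ _ hne] at this
    linarith
  have h3 : w ∈ hypCone g e := by
    have ht : Filter.Tendsto (fun k : ℕ => (1 / ((k : ℝ) + 1)) • u + w) Filter.atTop
        (nhds ((0 : ℝ) • u + w)) :=
      (tendsto_one_div_add_atTop_nhds_zero_nat.smul_const u).add_const w
    rw [zero_smul, zero_add] at ht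
    refine I.hp.isClosed.mem_of_tendsto ht (Filter.Eventually.of_forall fun k => ?_)
    have hk : (0 : ℝ) < (k : ℝ) + 1 := by positivity
    have := I.hp.cone_smul (h (k + 1)) (1 / ((k : ℝ) + 1)) (by positivity)
    rwa [smul_add, smul_smul, one_div, inv_mul_cancel₀ hk.ne', one_smul, ← one_div] at this
  have := I.lpos w h3 hw
  linarith

theorem NI.line_ne_zero {n d : ℕ} {g : MvPolynomial (Fin n) ℝ} {l e : Fin n → ℝ}
    (I : NI g l e d 1) {u w : Fin n → ℝ} (hu : u ∈ hypCone g e) (hu0 : u ≠ 0)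
    (hw : ∀ κ : ℝ, w ≠ κ • u) : linePoly g u w ≠ 0 := by
  intro hp
  have hg : ∀ α : ℝ, eval (u + α • w) g = 0 := by
    intro α; rw [← linePoly_eval, hp]; simp
  have hne : ∀ α : ℝ, u + α • w ≠ 0 := by
    intro α h
    have hα : α ≠ 0 := by rintro rfl; simp at h; exact hu0 h
    apply hw (-α⁻¹)
    have : α⁻¹ • (u + α • w) = 0 := by rw [h, smul_zero]
    rw [smul_add, smul_smul, inv_mul_cancel₀ hα, one_smul] at this
    rw [neg_smul]
    exact (neg_eq_of_add_eq_zero_right this).symm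
  have hw0 : w ≠ 0 := by simpa using hw 0
  have hc : Continuous fun α : ℝ => u + α • w := by fun_prop
  have hcl : IsClopen {α : ℝ | u + α • w ∈ hypCone g e} := by
    refine ⟨I.hp.isClosed.preimage hc, ?_⟩
    rw [isOpen_iff_eventually]
    intro α hα
    obtain ⟨ρ, hρ, h1⟩ := I.hp.local_mem hα (I.dir_pos hα (hne α) (hg α))
    filter_upwards [hc.continuousAt (Metric.ball_mem_nhds _ hρ)] with β hβ
    exact h1 _ hβ (hg β).ge
  have := hcl.eq_univ ⟨0, by simpa using hu⟩
  exact I.no_line hw0 (fun α => by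
    have : α ∈ {α : ℝ | u + α • w ∈ hypCone g e} := by rw [this]; trivial
    exact this)

theorem cev_add' {n : ℕ} (f g : MvPolynomial (Fin n) ℝ) (z : Fin n → ℂ) :
    cev (f + g) z = cev f z + cev g z := by simp [cev]

theorem cev_mul' {n : ℕ} (f g : MvPolynomial (Fin n) ℝ) (z : Fin n → ℂ) :
    cev (f * g) z = cev f z * cev g z := by simp [cev]

theorem cev_taylor {n : ℕ} (g : MvPolynomial (Fin n) ℝ) (e : Fin n → ℝ) :
    ∃ R : (Fin n → ℂ) × ℂ → ℂ, Continuous R ∧ ∀ x t, cev g (x + t • cv e) =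
      cev g x + t * cev (dirDeriv e g) x + t ^ 2 * R (x, t) := by
  induction g using MvPolynomial.induction_on with
  | C r => exact ⟨fun _ => 0, continuous_const, fun x t => by rw [dirDeriv_C]; simp [cev]⟩
  | add p q hp hq =>
    obtain ⟨R1, h1, h1'⟩ := hp
    obtain ⟨R2, h2, h2'⟩ := hq
    refine ⟨fun z => R1 z + R2 z, h1.add h2, fun x t => ?_⟩
    rw [dirDeriv_add, cev_add', cev_add', cev_add', h1', h2']
    ring
  | mul_X p i hp =>
    obtain ⟨R, h1, h2⟩ := hp
    refine ⟨fun z => cev (dirDeriv e p) z.1 * e i + R z * z.1 i + z.2 * R z * e i, ?_,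
      fun x t => ?_⟩
    · have := (cev_continuous (dirDeriv e p)).comp (continuous_fst (X := Fin n → ℂ) (Y := ℂ))
      have h3 : Continuous fun z : (Fin n → ℂ) × ℂ => cev (dirDeriv e p) z.1 := this
      fun_prop
    · rw [dirDeriv_mul, dirDeriv_X, cev_add', cev_mul', cev_mul', cev_mul', cev_mul', h2]
      have h3 : ∀ y, cev (X i : MvPolynomial (Fin n) ℝ) y = y i := fun y => by simp [cev]
      have h4 : ∀ y, cev (C (e i) : MvPolynomial (Fin n) ℝ) y = e i := fun y => by simp [cev]
      rw [h3, h3, h4]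
      simp [cv]
      ring

/-- the scaled limit inequality -/
theorem NI.scaled_limit {n d : ℕ} {g : MvPolynomial (Fin n) ℝ} {l e : Fin n → ℝ}
    (I : NI g l e d 1) {u w : Fin n → ℝ} (hu : u ∈ hypCone g e)
    {m : ℕ} (hm : 1 ≤ m) {q : Polynomial ℝ} (hq : linePoly g u w = Polynomial.X ^ m * q)
    {τ : ℝ} (hτ : 0 < τ) (β : ℂ) :
    ‖(τ * eval u (dirDeriv e g) + q.eval 0 * β.re ^ m : ℝ)‖ ≤
      ‖((τ * eval u (dirDeriv e g) : ℝ) : ℂ) + (q.eval 0 : ℝ) * β ^ m‖ := by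
  obtain ⟨R, hR, hT⟩ := cev_taylor g e
  have key : ∀ β : ℂ, Filter.Tendsto (fun η : ℝ => (1 / (η : ℂ) ^ m) *
      Polynomial.aeval β (linePoly g (u + (η ^ m * τ) • e) (η • w)))
      (nhdsWithin (0 : ℝ) (Set.Ioi 0))
      (nhds (((τ * eval u (dirDeriv e g) : ℝ) : ℂ) + (q.eval 0 : ℝ) * β ^ m)) := by
    intro β
    have hcont : Continuous fun η : ℝ => β ^ m * Polynomial.aeval ((η : ℂ) * β) q
        + τ * cev (dirDeriv e g) (cv u + ((η : ℂ) * β) • cv w)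
        + (η : ℂ) ^ m * τ ^ 2 * R (cv u + ((η : ℂ) * β) • cv w, (η : ℂ) ^ m * τ) := by
      have h1 : Continuous fun η : ℝ => (η : ℂ) := Complex.continuous_ofReal
      have h2 : Continuous fun η : ℝ => Polynomial.aeval ((η : ℂ) * β) q := by
        have := (Polynomial.continuous_aeval (A := ℂ) q).comp (h1.mul_const β)
        exact this
      have h3 : Continuous fun η : ℝ => cev (dirDeriv e g) (cv u + ((η : ℂ) * β) • cv w) :=
        (cev_continuous _).comp (by fun_prop)
      fun_prop
    have ht := (hcont.tendsto 0).mono_left (nhdsWithin_le_nhds (s := Set.Ioi (0 : ℝ)))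
    have hval : β ^ m * Polynomial.aeval (((0 : ℝ) : ℂ) * β) q
        + τ * cev (dirDeriv e g) (cv u + (((0 : ℝ) : ℂ) * β) • cv w)
        + ((0 : ℝ) : ℂ) ^ m * τ ^ 2 * R (cv u + (((0 : ℝ) : ℂ) * β) • cv w, ((0 : ℝ) : ℂ) ^ m * τ)
        = ((τ * eval u (dirDeriv e g) : ℝ) : ℂ) + (q.eval 0 : ℝ) * β ^ m := by
      have h0 : ((0 : ℝ) : ℂ) ^ m = 0 := by simp; omega
      rw [h0]
      have h1 : Polynomial.aeval (0 : ℂ) q = ((q.eval 0 : ℝ) : ℂ) := by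
        have := Polynomial.aeval_algebraMap_apply ℂ (0 : ℝ) q
        simpa using this
      simp only [Complex.ofReal_zero, zero_mul, zero_smul, add_zero, h1, cev_cv]
      push_cast
      ring
    rw [hval] at ht
    refine ht.congr' ?_
    filter_upwards [self_mem_nhdsWithin] with η hη
    have hη0 : (η : ℂ) ≠ 0 := by exact_mod_cast (ne_of_gt hη)
    have h1 : Polynomial.aeval β (linePoly g (u + (η ^ m * τ) • e) (η • w)) =
        cev g ((cv u + ((η : ℂ) * β) • cv w) + ((η : ℂ) ^ m * τ) • cv e) := by
      rw [cev_line]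
      congr 1
      ext i
      simp [cv]; ring
    have h2 : cev g (cv u + ((η : ℂ) * β) • cv w) =
        (η : ℂ) ^ m * (β ^ m * Polynomial.aeval ((η : ℂ) * β) q) := by
      rw [← cev_line, hq]; simp; ring
    rw [h1, hT, h2]
    field_simp
  have k1 := (key β).norm
  have k2 := (key (β.re : ℂ)).norm
  have k3 : ‖((τ * eval u (dirDeriv e g) : ℝ) : ℂ) + (q.eval 0 : ℝ) * ((β.re : ℝ) : ℂ) ^ m‖ =
      ‖(τ * eval u (dirDeriv e g) + q.eval 0 * β.re ^ m : ℝ)‖ := by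
    rw [← Complex.norm_real]
    congr 1
    push_cast
    ring
  rw [k3] at k2
  refine le_of_tendsto_of_tendsto k2 k1 ?_
  filter_upwards [self_mem_nhdsWithin] with η hη
  have hη' : (0 : ℝ) < η := hη
  have hIC := I.hp.add_e_mem_IC hu (η ^ m * τ) (by positivity)
  have := (I.hp.interior_line hIC (η • w)).norm_mono β
  rw [norm_mul, norm_mul]
  refine mul_le_mul_of_nonneg_left ?_ (norm_nonneg _)
  refine le_trans (le_of_eq ?_) this
  have h5 := Polynomial.aeval_algebraMap_apply ℂ β.re
    (linePoly g (u + (η ^ m * τ) • e) (η • w))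
  simp only [Complex.coe_algebraMap] at h5
  rw [h5, Complex.norm_real]
  simp

theorem NI.hess_neg {n d : ℕ} {g : MvPolynomial (Fin n) ℝ} {l e : Fin n → ℝ}
    (I : NI g l e d 1) {u w : Fin n → ℝ} (hu : u ∈ hypCone g e) (hu0 : u ≠ 0)
    (hgu : eval u g = 0) (hw : ∀ κ : ℝ, w ≠ κ • u) (h1 : (linePoly g u w).coeff 1 = 0) :
    (linePoly g u w).coeff 2 < 0 := by
  have hD := I.dir_pos hu hu0 hgu
  have hne := I.line_ne_zero hu hu0 hw
  obtain ⟨q, hq, hqd⟩ := Polynomial.exists_eq_pow_rootMultiplicity_mul_and_not_dvd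
        (linePoly g u w) hne 0
  rw [map_zero, sub_zero] at hq hqd
  generalize (linePoly g u w).rootMultiplicity 0 = m at hq
  rw [Polynomial.X_dvd_iff, Polynomial.coeff_zero_eq_eval_zero] at hqd
  have h0 : (linePoly g u w).coeff 0 = 0 := by
    rw [Polynomial.coeff_zero_eq_eval_zero, linePoly_eval]; simpa using hgu
  have hm : 2 ≤ m := by
    by_contra hlt
    have : (linePoly g u w).coeff m = q.eval 0 := by
      rw [hq, Polynomial.coeff_X_pow_mul', if_pos le_rfl, Nat.sub_self,
        Polynomial.coeff_zero_eq_eval_zero]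
    have hm' : m = 0 ∨ m = 1 := by omega
    rcases hm' with rfl | rfl
    · exact hqd (by rw [← this, h0])
    · exact hqd (by rw [← this, h1])
  have main : ∀ θ : ℝ, 0 < θ → θ < Real.pi →
      ((q.eval 0 : ℝ) : ℂ) * Complex.exp (θ * Complex.I) ^ m = ((-|q.eval 0| : ℝ) : ℂ) → False := by
    intro θ h2 h3 h4
    have habs : 0 < |q.eval 0| := abs_pos.mpr hqd
    have h5 := I.scaled_limit hu (by omega) hq (τ := |q.eval 0| / eval u (dirDeriv e g))
      (by positivity) (Complex.exp (θ * Complex.I))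
    rw [h4, div_mul_cancel₀ _ hD.ne', ← Complex.ofReal_add, add_neg_cancel, Complex.ofReal_zero,
      norm_zero, norm_le_zero_iff, Complex.exp_ofReal_mul_I_re] at h5
    have h6 : |q.eval 0| * |Real.cos θ| ^ m = |q.eval 0| := by
      rw [← abs_pow, ← abs_mul, show q.eval 0 * Real.cos θ ^ m = - |q.eval 0| by linarith, abs_neg,
        abs_abs]
    have h7 : |Real.cos θ| ^ m = 1 := by
      have : |q.eval 0| * |Real.cos θ| ^ m = |q.eval 0| * 1 := by rw [h6, mul_one]
      exact mul_left_cancel₀ habs.ne' this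
    have h8 : |Real.cos θ| = 1 := (pow_eq_one_iff_of_nonneg (abs_nonneg _) (by omega)).mp h7
    have h9 := Real.sin_pos_of_pos_of_lt_pi h2 h3
    have h10 := Real.sin_sq_add_cos_sq θ
    rw [← sq_abs (Real.cos θ), h8] at h10
    nlinarith
  have hmc : (m : ℂ) ≠ 0 := by
    have : m ≠ 0 := by omega
    exact_mod_cast this
  have hmr : (2 : ℝ) ≤ m := by exact_mod_cast hm
  have hpi := Real.pi_pos
  rcases lt_or_gt_of_ne hqd with hneg | hpos
  · by_cases hm2 : m = 2
    · rw [hm2] at hq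
      rw [hq, Polynomial.coeff_X_pow_mul', if_pos le_rfl, Nat.sub_self,
        Polynomial.coeff_zero_eq_eval_zero]
      exact hneg
    · exfalso
      have hm3 : (3 : ℝ) ≤ m := by
        have : 3 ≤ m := by omega
        exact_mod_cast this
      refine main (2 * Real.pi / m) (by positivity) ?_ ?_
      · rw [div_lt_iff₀ (by linarith)]
        nlinarith
      · rw [← Complex.exp_nat_mul]
        have : (m : ℂ) * (((2 * Real.pi / m : ℝ) : ℂ) * Complex.I) = 2 * Real.pi * Complex.I := by
          push_cast; field_simp
        rw [this, Complex.exp_two_pi_mul_I, mul_one, abs_of_neg hneg, neg_neg]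
  · exfalso
    refine main (Real.pi / m) (by positivity) ?_ ?_
    · rw [div_lt_iff₀ (by linarith)]
      nlinarith
    · rw [← Complex.exp_nat_mul]
      have : (m : ℂ) * (((Real.pi / m : ℝ) : ℂ) * Complex.I) = Real.pi * Complex.I := by
        push_cast; field_simp
      rw [this, Complex.exp_pi_mul_I, abs_of_pos hpos]
      push_cast
      ring

theorem phi_prod_cont {n : ℕ} {κ : Type*} [Fintype κ] (Φ : MvPolynomial (Fin n) ℝ →ₗ[ℝ] ℝ) :
    Continuous fun p : κ → Fin n → ℝ => Φ (∏ k, lin (p k)) := by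
  classical
  have : ∀ p : κ → Fin n → ℝ, Φ (∏ k, lin (p k)) =
      ∑ f : κ → Fin n, (∏ k, p k (f k)) * Φ (∏ k, X (f k)) := by
    intro p
    simp only [lin]
    rw [Finset.prod_univ_sum, map_sum, Fintype.piFinset_univ]
    refine Finset.sum_congr rfl fun f _ => ?_
    rw [Finset.prod_mul_distrib, ← map_prod, ← smul_eq_C_mul, map_smul, smul_eq_mul]
  simp only [this]
  fun_prop

/-- the polarized quadratic form at `u` -/
noncomputable def BB {n : ℕ} (Φ : MvPolynomial (Fin n) ℝ →ₗ[ℝ] ℝ) (u : Fin n → ℝ) (m : ℕ)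
    (x y : Fin n → ℝ) : ℝ := Φ (lin u ^ m * (lin x * lin y))

theorem BB_comm {n : ℕ} (Φ : MvPolynomial (Fin n) ℝ →ₗ[ℝ] ℝ) (u : Fin n → ℝ) (m : ℕ)
    (x y : Fin n → ℝ) : BB Φ u m x y = BB Φ u m y x := by
  rw [BB, BB, mul_comm (lin x)]

theorem BB_add {n : ℕ} (Φ : MvPolynomial (Fin n) ℝ →ₗ[ℝ] ℝ) (u : Fin n → ℝ) (m : ℕ)
    (x y z : Fin n → ℝ) : BB Φ u m x (y + z) = BB Φ u m x y + BB Φ u m x z := by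
  simp only [BB, lin_add, mul_add, map_add]

theorem BB_smul {n : ℕ} (Φ : MvPolynomial (Fin n) ℝ →ₗ[ℝ] ℝ) (u : Fin n → ℝ) (m : ℕ)
    (x y : Fin n → ℝ) (c : ℝ) : BB Φ u m x (c • y) = c * BB Φ u m x y := by
  simp only [BB, lin_smul, mul_smul_comm, map_smul, smul_eq_mul]

theorem BB_add' {n : ℕ} (Φ : MvPolynomial (Fin n) ℝ →ₗ[ℝ] ℝ) (u : Fin n → ℝ) (m : ℕ)
    (x y z : Fin n → ℝ) : BB Φ u m (x + y) z = BB Φ u m x z + BB Φ u m y z := by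
  rw [BB_comm, BB_add, BB_comm, BB_comm Φ u m z]

theorem BB_smul' {n : ℕ} (Φ : MvPolynomial (Fin n) ℝ →ₗ[ℝ] ℝ) (u : Fin n → ℝ) (m : ℕ)
    (x y : Fin n → ℝ) (c : ℝ) : BB Φ u m (c • x) y = c * BB Φ u m x y := by
  rw [BB_comm, BB_smul, BB_comm]

theorem NI.BB_neg {n m : ℕ} {g : MvPolynomial (Fin n) ℝ} {l e : Fin n → ℝ}
    (I : NI g l e (m + 2) 1) {u : Fin n → ℝ} (hu : u ∈ hypCone g e) (hu0 : u ≠ 0)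
    (hgu : eval u g = 0) {Φ : MvPolynomial (Fin n) ℝ →ₗ[ℝ] ℝ}
    (hΦ : ∀ y, Φ (lin y ^ (m + 2)) = eval y g) :
    ∃ s : (Fin n → ℝ) →ₗ[ℝ] ℝ, s u = 1 ∧ ∀ w, w ≠ 0 → s w = 0 → BB Φ u m w w < 0 := by
  have huu : BB Φ u m u u = 0 := by
    rw [← hgu, ← hΦ, BB, ← pow_two, ← pow_add]
  have huw : ∀ w, (linePoly g u w).coeff 1 = (m + 2) * BB Φ u m u w := by
    intro w
    rw [linePoly_eq, lineK_coeff hΦ _ _ 1 (by omega), BB, pow_one, Nat.choose_one_right,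
      show m + 2 - 1 = m + 1 by omega, pow_succ, mul_assoc]
    push_cast; ring
  have hww : ∀ w, (linePoly g u w).coeff 2 = ((m + 2).choose 2 : ℝ) * BB Φ u m w w := by
    intro w
    rw [linePoly_eq, lineK_coeff hΦ _ _ 2 (by omega), BB, pow_two, Nat.add_sub_cancel]
  have hue : 0 < BB Φ u m u e := by
    have := I.coeff_one_pos hu hu0 hgu
    rw [huw] at this
    have h2 : (0 : ℝ) < m + 2 := by positivity
    exact (pos_iff_pos_of_mul_pos this).mp h2
  have hneg : ∀ w, (∀ κ : ℝ, w ≠ κ • u) → BB Φ u m u w = 0 → BB Φ u m w w < 0 := by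
    intro w h1 h2
    have := I.hess_neg hu hu0 hgu h1 (by rw [huw, h2, mul_zero])
    rw [hww] at this
    have hc : (0 : ℝ) < ((m + 2).choose 2 : ℝ) := by
      exact_mod_cast Nat.choose_pos (by omega)
    by_contra hge
    push Not at hge
    have := mul_nonneg hc.le hge
    linarith
  obtain ⟨ε, hε, hzz⟩ : ∃ ε : ℝ, 0 < ε ∧ 0 < BB Φ u m (u + ε • e) (u + ε • e) := by
    refine ⟨BB Φ u m u e / (1 + |BB Φ u m e e|), by positivity, ?_⟩
    set b := BB Φ u m u e
    set a := BB Φ u m e e with ha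
    set ε := b / (1 + |a|) with hε
    have hεp : 0 < ε := by positivity
    rw [BB_add, BB_add', BB_add', BB_smul, BB_smul, BB_smul', BB_smul', huu, BB_comm Φ u m e u, ← ha]
    have h1 : ε * (1 + |a|) = b := by rw [hε]; field_simp
    have h2 : -|a| ≤ a := neg_abs_le a
    have h3 : 0 ≤ |a| := abs_nonneg a
    have h4 : 0 < ε * (2 * b + ε * a) := by
      apply mul_pos hεp
      nlinarith
    change 0 < 0 + ε * b + (ε * b + ε * (ε * a))
    linarith [h4, show ε * (2 * b + ε * a) = 0 + ε * b + (ε * b + ε * (ε * a)) by ring]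
  set z := u + ε • e with hz
  have huz : BB Φ u m u z = ε * BB Φ u m u e := by rw [hz, BB_add, BB_smul, huu, zero_add]
  have huzp : 0 < BB Φ u m u z := by rw [huz]; positivity
  refine ⟨(BB Φ u m u z)⁻¹ • (Φ ∘ₗ LinearMap.mulLeft ℝ (lin u ^ m * lin z) ∘ₗ linL), ?_, ?_⟩
  · simp only [LinearMap.smul_apply, LinearMap.comp_apply, LinearMap.mulLeft_apply, linL_apply,
      smul_eq_mul]
    rw [mul_assoc]
    change (BB Φ u m u z)⁻¹ * BB Φ u m z u = 1
    rw [BB_comm Φ u m z u, inv_mul_cancel₀ huzp.ne']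
  · intro w hw0 hsw
    have hzw : BB Φ u m z w = 0 := by
      simp only [LinearMap.smul_apply, LinearMap.comp_apply, LinearMap.mulLeft_apply, linL_apply,
        smul_eq_mul] at hsw
      have := (mul_eq_zero.mp hsw).resolve_left (inv_ne_zero huzp.ne')
      rwa [mul_assoc] at this
    by_cases h0 : BB Φ u m u w = 0
    · refine hneg w ?_ h0
      intro κ hκ
      rw [hκ, BB_smul, BB_comm Φ u m z u] at hzw
      have : κ = 0 := (mul_eq_zero.mp hzw).resolve_right huzp.ne'
      apply hw0
      rw [hκ, this, zero_smul]
    · set κ := - (BB Φ u m u w / BB Φ u m u z) with hκ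
      have hκ0 : κ ≠ 0 := neg_ne_zero.mpr (div_ne_zero h0 huzp.ne')
      have h1 : BB Φ u m u (w + κ • z) = 0 := by
        rw [BB_add, BB_smul, hκ, neg_mul, div_mul_cancel₀ _ huzp.ne', add_neg_cancel]
      have h2 : BB Φ u m (w + κ • z) (w + κ • z) ≤ 0 := by
        by_cases h3 : ∃ μ : ℝ, w + κ • z = μ • u
        · obtain ⟨μ, hμ⟩ := h3
          rw [hμ, BB_smul, BB_smul', huu]; simp
        · push Not at h3
          exact (hneg _ h3 h1).le
      rw [BB_add, BB_add', BB_add', BB_smul, BB_smul, BB_smul', BB_smul', BB_comm Φ u m w z,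
        hzw] at h2
      have h3 : 0 < κ ^ 2 * BB Φ u m z z := by positivity
      nlinarith

theorem NI.neg_nbhd {n m : ℕ} {g : MvPolynomial (Fin n) ℝ} {l e : Fin n → ℝ}
    (I : NI g l e (m + 2) 1) {u : Fin n → ℝ} (hu : u ∈ hypCone g e) (hu0 : u ≠ 0)
    (hgu : eval u g = 0) {Φ : MvPolynomial (Fin n) ℝ →ₗ[ℝ] ℝ}
    (hΦ : ∀ y, Φ (lin y ^ (m + 2)) = eval y g) :
    ∃ s : (Fin n → ℝ) →ₗ[ℝ] ℝ, s u = 1 ∧ ∃ ρ > 0, ∀ p : Fin m → Fin n → ℝ,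
      (∀ k, p k ∈ Metric.ball u ρ) → ∀ w, s w = 0 →
        Φ ((∏ k, lin (p k)) * (lin w * lin w)) ≤ 0 := by
  obtain ⟨s, hsu, hs⟩ := I.BB_neg hu hu0 hgu hΦ
  refine ⟨s, hsu, ?_⟩
  have hsc : Continuous s := s.continuous_of_finiteDimensional
  have hK : IsCompact (Metric.sphere (0 : Fin n → ℝ) 1 ∩ {w | s w = 0}) :=
    (isCompact_sphere _ _).inter_right (isClosed_eq hsc continuous_const)
  have hF : Continuous fun z : (Fin m → Fin n → ℝ) × (Fin n → ℝ) =>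
      Φ ((∏ k, lin (z.1 k)) * (lin z.2 * lin z.2)) := by
    have h0 : ∀ (p : Fin m → Fin n → ℝ) (w : Fin n → ℝ), (∏ k, lin (p k)) * (lin w * lin w) =
        ∏ k : Fin (m + 2), lin ((Fin.cons w (Fin.cons w p : Fin (m + 1) → Fin n → ℝ) :
          Fin (m + 2) → Fin n → ℝ) k) := by
      intro p w
      rw [Fin.prod_univ_succ, Fin.prod_univ_succ]
      simp only [Fin.cons_zero, Fin.cons_succ]
      ring
    simp only [h0]
    have h2 : Continuous (fun z : (Fin m → Fin n → ℝ) × (Fin n → ℝ) =>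
        (Fin.cons z.2 (Fin.cons z.2 z.1 : Fin (m + 1) → Fin n → ℝ) : Fin (m + 2) → Fin n → ℝ)) := by
      refine Continuous.finCons continuous_snd (Continuous.finCons continuous_snd continuous_fst)
    exact (phi_prod_cont (κ := Fin (m + 2)) Φ).comp h2
  have hev : ∀ᶠ p in nhds (fun _ : Fin m => u), ∀ w ∈ Metric.sphere (0 : Fin n → ℝ) 1 ∩
      {w | s w = 0}, Φ ((∏ k, lin (p k)) * (lin w * lin w)) < 0 := by
    refine IsCompact.eventually_forall_of_forall_eventually hK fun w hw => ?_
    refine hF.continuousAt.eventually (gt_mem_nhds ?_)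
    have := hs w (by
      rintro rfl
      simp at hw) hw.2
    simpa [BB] using this
  obtain ⟨ρ, hρ, h⟩ := Metric.eventually_nhds_iff.mp hev
  refine ⟨ρ, hρ, fun p hp w hw => ?_⟩
  by_cases hw0 : w = 0
  · simp [hw0, lin_zero]
  have hn : ‖w‖ ≠ 0 := norm_ne_zero_iff.mpr hw0
  have h1 := h (y := p) ((dist_pi_lt_iff hρ).mpr fun k => hp k) (‖w‖⁻¹ • w) ⟨by
    simp [norm_smul, hn], by simp [hw]⟩
  have h2 : lin w = ‖w‖ • lin (‖w‖⁻¹ • w) := by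
    rw [← lin_smul, smul_smul, mul_inv_cancel₀ hn, one_smul]
  rw [h2, smul_mul_smul_comm, mul_smul_comm, map_smul, smul_eq_mul]
  exact mul_nonpos_of_nonneg_of_nonpos (by positivity) h1.le

theorem NI.two_le {n d : ℕ} {g : MvPolynomial (Fin n) ℝ} {l e : Fin n → ℝ}
    (I : NI g l e (d + 1) 1) {u : Fin n → ℝ} (hu : u ∈ hypCone g e) (hu0 : u ≠ 0)
    (hgu : eval u g = 0) : ∃ m, d + 1 = m + 2 := by
  rcases d with _ | m
  · exfalso
    obtain ⟨Φ, hΦ⟩ := exists_polar g I.hp.hom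
    have hm : -u ∈ hypCone g e := by
      refine I.hp.mem_cone fun t ht => ?_
      have h1 : eval (-u + t • e) g = t * eval e g := by
        rw [← hΦ, ← neg_one_smul ℝ u, lin_add, lin_smul, lin_smul, zero_add, pow_one, map_add,
          map_smul, map_smul]
        have h2 := hΦ u
        have h3 := hΦ e
        rw [zero_add, pow_one] at h2 h3
        rw [h2, h3, hgu]; simp
      rw [h1]
      exact mul_pos ht I.hp.pos
    have h1 := I.lpos u hu hu0
    have h2 := I.lpos (-u) hm (neg_ne_zero.mpr hu0)
    rw [← neg_one_smul ℝ u, ell_smul] at h2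
    linarith
  · exact ⟨m, rfl⟩

/-- flexible form of spectrahedral shadow cones, with a finite family of matrix inequalities -/
def SHF {n : ℕ} (κ : Type) [Fintype κ] (S : Set (Fin n → ℝ)) : Prop :=
  ∃ (q : ℕ) (J : Type) (_ : Fintype J) (A : J → (Fin q → ℝ) →ₗ[ℝ] Matrix κ κ ℝ)
    (L : (Fin q → ℝ) →ₗ[ℝ] (Fin n → ℝ)),
    (∀ j v, (A j v).IsSymm) ∧ S = L '' {v | ∀ j, (A j v).PosSemidef}

theorem SHF.of_space {n : ℕ} {κ : Type} [Fintype κ] {V : Type*} [AddCommGroup V] [Module ℝ V]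
    [FiniteDimensional ℝ V] {J : Type} [Fintype J] (A : J → V →ₗ[ℝ] Matrix κ κ ℝ)
    (L : V →ₗ[ℝ] (Fin n → ℝ)) (hA : ∀ j v, (A j v).IsSymm) :
    SHF κ (L '' {v | ∀ j, (A j v).PosSemidef}) := by
  let b := (Module.finBasis ℝ V).equivFun
  refine ⟨_, J, inferInstance, fun j => (A j) ∘ₗ b.symm.toLinearMap, L ∘ₗ b.symm.toLinearMap,
    fun j v => hA _ _, ?_⟩
  ext x
  constructor
  · rintro ⟨v, hv, rfl⟩
    exact ⟨b v, fun j => by simpa using hv j, by simp⟩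
  · rintro ⟨v, hv, rfl⟩
    exact ⟨b.symm v, fun j => by simpa using hv j, by simp⟩

theorem blockDiagonal_psd {κ J : Type} [Fintype κ] [Fintype J] [DecidableEq J]
    (M : J → Matrix κ κ ℝ) : (Matrix.blockDiagonal M).PosSemidef ↔ ∀ j, (M j).PosSemidef := by
  constructor
  · intro h j
    have := h.submatrix (fun a : κ => (a, j))
    convert this using 1
    ext a b
    simp [Matrix.blockDiagonal_apply]
  · intro h
    rw [Matrix.posSemidef_iff_dotProduct_mulVec]
    constructor
    · rw [Matrix.IsHermitian, Matrix.blockDiagonal_conjTranspose]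
      congr 1
      funext j
      exact (h j).1
    · intro x
      have : star x ⬝ᵥ (Matrix.blockDiagonal M).mulVec x
          = ∑ j, star (fun a => x (a, j)) ⬝ᵥ (M j).mulVec (fun a => x (a, j)) := by
        simp only [dotProduct, Matrix.mulVec, Fintype.sum_prod_type, Matrix.blockDiagonal_apply,
          Pi.star_apply]
        rw [Finset.sum_comm]
        refine Finset.sum_congr rfl fun j _ => Finset.sum_congr rfl fun a _ => ?_
        congr 1
        refine Finset.sum_congr rfl fun b _ => ?_
        simp [ite_mul]
      rw [this]
      exact Finset.sum_nonneg fun j _ => (Matrix.posSemidef_iff_dotProduct_mulVec.mp (h j)).2 _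

theorem SHF.isShadow {n : ℕ} {κ : Type} [Fintype κ] {S : Set (Fin n → ℝ)} (h : SHF κ S) :
    IsSpectrahedralShadowCone S := by
  classical
  obtain ⟨q, J, _, A, L, hA, rfl⟩ := h
  let eq := (Fintype.equivFin (κ × J)).symm
  refine ⟨q, _, fun i => (Matrix.blockDiagonal fun j => A j (Pi.single i 1)).submatrix eq eq, L,
    fun i => ?_, ?_⟩
  · ext a b
    simp only [Matrix.transpose_apply, Matrix.submatrix_apply, Matrix.blockDiagonal_apply]
    by_cases hab : (eq a).2 = (eq b).2
    · rw [if_pos hab, if_pos hab.symm, hab]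
      exact congrFun (congrFun (hA (eq b).2 (Pi.single i 1)) (eq a).1) (eq b).1
    · rw [if_neg hab, if_neg (Ne.symm hab)]
  · congr 1
    ext v
    have : ∑ i, v i • (Matrix.blockDiagonal fun j => A j (Pi.single i 1)).submatrix eq eq
        = (Matrix.blockDiagonal fun j => A j v).submatrix eq eq := by
      ext a b
      have hv : v = ∑ i, v i • (Pi.single i 1 : Fin q → ℝ) := by
        ext k; simp [Finset.sum_apply, Pi.single_apply]
      simp only [Matrix.sum_apply, Matrix.smul_apply, Matrix.submatrix_apply,
        Matrix.blockDiagonal_apply, smul_eq_mul]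
      by_cases hab : (eq a).2 = (eq b).2
      · conv_rhs => rw [hv]
        simp [hab, Matrix.sum_apply]
      · simp [hab]
    simp only [Set.mem_ofPred_eq]
    rw [this, Matrix.posSemidef_submatrix_equiv, blockDiagonal_psd]

open Pointwise in
theorem SHF.add {n : ℕ} {κ : Type} [Fintype κ] {S T : Set (Fin n → ℝ)} (h : SHF κ S)
    (h' : SHF κ T) : SHF κ (S + T) := by
  obtain ⟨q, J, _, A, L, hA, rfl⟩ := h
  obtain ⟨q', J', _, A', L', hA', rfl⟩ := h'
  have := SHF.of_space (n := n) (κ := κ) (V := (Fin q → ℝ) × (Fin q' → ℝ)) (J := J ⊕ J')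
    (Sum.elim (fun j => A j ∘ₗ LinearMap.fst ℝ _ _) (fun j => A' j ∘ₗ LinearMap.snd ℝ _ _))
    (L.coprod L') (by rintro (j | j) v <;> simp [hA, hA'])
  convert this using 1
  ext x
  constructor
  · rintro ⟨_, ⟨v, hv, rfl⟩, _, ⟨w, hw, rfl⟩, rfl⟩
    refine ⟨(v, w), ?_, by simp⟩
    rintro (j | j)
    · exact hv j
    · exact hw j
  · rintro ⟨⟨v, w⟩, hv, rfl⟩
    exact ⟨_, ⟨v, fun j => hv (Sum.inl j), rfl⟩, _, ⟨w, fun j => hv (Sum.inr j), rfl⟩, by simp⟩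

theorem SHF.zero {n : ℕ} {κ : Type} [Fintype κ] : SHF κ ({0} : Set (Fin n → ℝ)) := by
  refine ⟨0, Empty, inferInstance, fun _ => 0, 0, fun j => j.elim, ?_⟩
  ext x
  constructor
  · rintro rfl
    exact ⟨0, fun j => j.elim, rfl⟩
  · rintro ⟨v, _, rfl⟩
    rfl

open Pointwise in
theorem SHF.sum {n : ℕ} {κ : Type} [Fintype κ] {ι : Type*} (t : Finset ι)
    (S : ι → Set (Fin n → ℝ)) (h : ∀ i ∈ t, SHF κ (S i)) : SHF κ (∑ i ∈ t, S i) := by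
  classical
  induction t using Finset.induction_on with
  | empty => rw [Finset.sum_empty, ← Set.singleton_zero]; exact SHF.zero
  | insert i t hi ih =>
    rw [Finset.sum_insert hi]
    exact (h i (by simp)).add (ih fun j hj => h j (by simp [hj]))

theorem smul_one_psd {κ : Type} [Fintype κ] [DecidableEq κ] [Nonempty κ] (c : ℝ) :
    (c • (1 : Matrix κ κ ℝ)).PosSemidef ↔ 0 ≤ c := by
  constructor
  · intro h
    have := h.diag_nonneg (i := Classical.arbitrary κ)
    simpa using this
  · intro h
    exact Matrix.PosSemidef.one.smul h

theorem SHF.ray {n : ℕ} {κ : Type} [Fintype κ] [Nonempty κ] (e : Fin n → ℝ) :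
    SHF κ {x | ∃ t : ℝ, 0 ≤ t ∧ x = t • e} := by
  classical
  have := SHF.of_space (n := n) (κ := κ) (V := ℝ) (J := Unit)
    (fun _ => LinearMap.toSpanSingleton ℝ _ 1) (LinearMap.toSpanSingleton ℝ _ e)
    (by intro j v; simp [Matrix.IsSymm])
  convert this using 1
  ext x
  simp only [LinearMap.toSpanSingleton_apply, smul_one_psd]
  constructor
  · rintro ⟨t, ht, rfl⟩
    exact ⟨t, fun _ => ht, rfl⟩
  · rintro ⟨t, ht, rfl⟩
    exact ⟨t, ht (), rfl⟩

open TensorProduct in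
/-- product functional on the tensor product -/
noncomputable def TH {n : ℕ} {ι : Type} (L : MvPolynomial ι ℝ →ₗ[ℝ] ℝ)
    (Φ : MvPolynomial (Fin n) ℝ →ₗ[ℝ] ℝ) :
    (MvPolynomial ι ℝ ⊗[ℝ] MvPolynomial (Fin n) ℝ) →ₗ[ℝ] ℝ :=
  LinearMap.mul' ℝ ℝ ∘ₗ TensorProduct.map L Φ

open TensorProduct in
theorem TH_tmul {n : ℕ} {ι : Type} (L : MvPolynomial ι ℝ →ₗ[ℝ] ℝ)
    (Φ : MvPolynomial (Fin n) ℝ →ₗ[ℝ] ℝ) (p : MvPolynomial ι ℝ) (q : MvPolynomial (Fin n) ℝ) :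
    TH L Φ (p ⊗ₜ[ℝ] q) = L p * Φ q := by
  simp [TH]

open TensorProduct in
/-- generic linear form with values in the second factor -/
noncomputable def gl {n : ℕ} {ι : Type} [Fintype ι] (w : ι → Fin n → ℝ) :
    MvPolynomial ι ℝ ⊗[ℝ] MvPolynomial (Fin n) ℝ :=
  ∑ a, (X a : MvPolynomial ι ℝ) ⊗ₜ[ℝ] lin (w a)

open TensorProduct in
theorem tmul_prod' {n : ℕ} {ι κ : Type} (t : Finset κ) (f : κ → MvPolynomial ι ℝ)
    (g : κ → MvPolynomial (Fin n) ℝ) :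
    ∏ k ∈ t, (f k ⊗ₜ[ℝ] g k) = (∏ k ∈ t, f k) ⊗ₜ[ℝ] (∏ k ∈ t, g k) := by
  classical
  induction t using Finset.induction_on with
  | empty => simp [Algebra.TensorProduct.one_def]
  | insert i t hi ih =>
    rw [Finset.prod_insert hi, ih, Algebra.TensorProduct.tmul_mul_tmul, Finset.prod_insert hi,
      Finset.prod_insert hi]

open TensorProduct in
theorem gl_prod {n m : ℕ} {ι : Type} [Fintype ι] (p : Fin m → ι → Fin n → ℝ) :
    ∏ k, gl (p k) = ∑ J : Fin m → ι, (∏ k, (X (J k) : MvPolynomial ι ℝ)) ⊗ₜ[ℝ]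
      (∏ k, lin (p k (J k))) := by
  classical
  simp only [gl]
  rw [Finset.prod_univ_sum, Fintype.piFinset_univ]
  exact Finset.sum_congr rfl fun J _ => tmul_prod' _ _ _

theorem gl_sub {n : ℕ} {ι : Type} [Fintype ι] (v w : ι → Fin n → ℝ) :
    gl v - gl w = gl (fun a => v a - w a) := by
  simp only [gl, lin_sub, TensorProduct.tmul_sub, Finset.sum_sub_distrib]

open TensorProduct in
theorem gl_const {n : ℕ} {ι : Type} [Fintype ι] (x : Fin n → ℝ) :
    gl (fun _ : ι => x) = (∑ a, (X a : MvPolynomial ι ℝ)) ⊗ₜ[ℝ] lin x := by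
  simp only [gl, TensorProduct.sum_tmul]

theorem TH_neg {n m : ℕ} {ι : Type} [Fintype ι] (L : MvPolynomial ι ℝ →ₗ[ℝ] ℝ)
    (Φ : MvPolynomial (Fin n) ℝ →ₗ[ℝ] ℝ)
    (hpsd : ∀ J : Fin m → ι,
      (Matrix.of fun a b => L ((∏ k, X (J k)) * (X a * X b))).PosSemidef)
    (B : Set (Fin n → ℝ)) (s : (Fin n → ℝ) →ₗ[ℝ] ℝ)
    (hneg : ∀ p : Fin m → Fin n → ℝ, (∀ k, p k ∈ B) → ∀ w, s w = 0 →
      Φ ((∏ k, lin (p k)) * (lin w * lin w)) ≤ 0)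
    (p : Fin m → ι → Fin n → ℝ) (hp : ∀ k a, p k a ∈ B) (w : ι → Fin n → ℝ)
    (hw : ∀ a, s (w a) = 0) :
    TH L Φ ((∏ k, gl (p k)) * (gl w * gl w)) ≤ 0 := by
  rw [gl_prod, gl, Finset.sum_mul_sum, Finset.sum_mul]
  simp only [Finset.mul_sum, Algebra.TensorProduct.tmul_mul_tmul, map_sum, TH_tmul]
  refine Finset.sum_nonpos fun J _ => ?_
  obtain ⟨N, z, hz⟩ := Matrix.posSemidef_iff_eq_sum_vecMulVec.mp (hpsd J)
  have hz' : ∀ a b, L ((∏ k, X (J k)) * (X a * X b)) = ∑ i, z i a * z i b := by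
    intro a b
    have := congrFun (congrFun hz a) b
    simpa [Matrix.sum_apply, Matrix.vecMulVec_apply] using this
  simp only [hz']
  have key : ∑ a, ∑ b, (∑ i, z i a * z i b) *
      Φ ((∏ k, lin (p k (J k))) * (lin (w a) * lin (w b))) =
      ∑ i, Φ ((∏ k, lin (p k (J k))) * (lin (∑ a, z i a • w a) * lin (∑ a, z i a • w a))) := by
    simp only [lin_sum, lin_smul, Finset.sum_mul_sum, Finset.mul_sum, map_sum, smul_mul_assoc,
      mul_smul_comm, map_smul, smul_eq_mul, Finset.sum_mul]
    rw [Finset.sum_comm_cycle]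
    refine Finset.sum_congr rfl fun i _ => ?_
    rw [Finset.sum_comm]
    refine Finset.sum_congr rfl fun a _ => Finset.sum_congr rfl fun b _ => ?_
    ring
  rw [key]
  refine Finset.sum_nonpos fun i _ => hneg _ (fun k => hp _ _) _ ?_
  simp [map_sum, hw]

theorem taylor_id {R : Type*} [CommRing R] (a b : R) (m : ℕ) :
    b ^ (m + 2) = a ^ (m + 2) + ((m : R) + 2) * (a ^ (m + 1) * (b - a)) +
      ∑ i ∈ Finset.range (m + 1), ((i : R) + 1) * (a ^ i * b ^ (m - i) * ((b - a) * (b - a))) := by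
  induction m with
  | zero => simp; ring
  | succ m ih =>
    rw [Finset.sum_range_succ]
    have : ∑ i ∈ Finset.range (m + 1),
        ((i : R) + 1) * (a ^ i * b ^ (m + 1 - i) * ((b - a) * (b - a))) =
        b * ∑ i ∈ Finset.range (m + 1),
        ((i : R) + 1) * (a ^ i * b ^ (m - i) * ((b - a) * (b - a))) := by
      rw [Finset.mul_sum]
      refine Finset.sum_congr rfl fun i hi => ?_
      rw [show m + 1 - i = (m - i) + 1 by have := Finset.mem_range.mp hi; omega]
      ring
    rw [this, show b ^ (m + 1 + 2) = b * b ^ (m + 2) by ring]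
    have ih' := sub_eq_iff_eq_add'.mpr ih
    rw [← ih']
    simp
    ring

theorem taylor_id' {R : Type*} [CommRing R] (a b : R) (m : ℕ) :
    b ^ (m + 2) = a ^ (m + 2) + (m + 2) • (a ^ (m + 1) * (b - a)) +
      ∑ i ∈ Finset.range (m + 1), (i + 1) • (a ^ i * b ^ (m - i) * ((b - a) * (b - a))) := by
  rw [taylor_id a b m]
  simp only [nsmul_eq_mul]
  push_cast
  rfl

theorem TH_ineq {n m : ℕ} {ι : Type} [Fintype ι] (L : MvPolynomial ι ℝ →ₗ[ℝ] ℝ)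
    (Φ : MvPolynomial (Fin n) ℝ →ₗ[ℝ] ℝ)
    (hpsd : ∀ J : Fin m → ι,
      (Matrix.of fun a b => L ((∏ k, X (J k)) * (X a * X b))).PosSemidef)
    (B : Set (Fin n → ℝ)) (s : (Fin n → ℝ) →ₗ[ℝ] ℝ)
    (hneg : ∀ p : Fin m → Fin n → ℝ, (∀ k, p k ∈ B) → ∀ w, s w = 0 →
      Φ ((∏ k, lin (p k)) * (lin w * lin w)) ≤ 0)
    (v : ι → Fin n → ℝ) (hv : ∀ a, v a ∈ B) (hsv : ∀ a, s (v a) = 1)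
    (x : Fin n → ℝ) (hx : x ∈ B) (hsx : s x = 1)
    (hlin : ∑ a, L (X a * (∑ b, X b) ^ (m + 1)) • (v a - x) = 0) :
    TH L Φ (gl v ^ (m + 2)) ≤ L ((∑ b, X b) ^ (m + 2)) * Φ (lin x ^ (m + 2)) := by
  rw [taylor_id' (gl fun _ => x) (gl v) m, map_add, map_add, gl_sub]
  have h1 : TH L Φ (gl (fun _ => x) ^ (m + 2)) =
      L ((∑ b, X b) ^ (m + 2)) * Φ (lin x ^ (m + 2)) := by
    rw [gl_const, Algebra.TensorProduct.tmul_pow, TH_tmul]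
  have h2 : TH L Φ ((m + 2) • (gl (fun _ => x) ^ (m + 1) * gl fun a => v a - x)) = 0 := by
    have : TH L Φ (gl (fun _ => x) ^ (m + 1) * gl fun a => v a - x) = 0 := by
      rw [gl_const, Algebra.TensorProduct.tmul_pow, gl, Finset.mul_sum]
      simp only [Algebra.TensorProduct.tmul_mul_tmul, map_sum, TH_tmul]
      have h3 : Φ (lin x ^ (m + 1) *
          lin (∑ a, L (X a * (∑ b, X b) ^ (m + 1)) • (v a - x))) = 0 := by
        rw [hlin, lin_zero, mul_zero, map_zero]
      rw [← h3, lin_sum, Finset.mul_sum, map_sum]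
      refine Finset.sum_congr rfl fun a _ => ?_
      rw [lin_smul, mul_smul_comm, map_smul, smul_eq_mul, mul_comm (X a)]
    rw [map_nsmul, this, smul_zero]
  rw [h1, h2, add_zero, add_le_iff_nonpos_right, map_sum]
  refine Finset.sum_nonpos fun i hi => ?_
  obtain ⟨j, hj⟩ : ∃ j, m = i + j := ⟨m - i, by have := Finset.mem_range.mp hi; omega⟩
  subst hj
  rw [map_nsmul]
  have h4 := TH_neg L Φ hpsd B s hneg
    (Fin.append (fun _ : Fin i => fun _ : ι => x) (fun _ : Fin j => v)) ?_
    (fun a => v a - x) (fun a => by simp [hsv, hsx])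
  · rw [Fin.prod_univ_add] at h4
    simp only [Fin.append_left, Fin.append_right, Finset.prod_const, Finset.card_univ,
      Fintype.card_fin] at h4
    rw [Nat.add_sub_cancel_left]
    exact nsmul_nonpos h4 _
  · intro k a
    induction k using Fin.addCases with
    | left k => simpa using hx
    | right k => simpa using hv a

/-- truncated linear functional given by its values on monomials -/
noncomputable def LY {ι : Type} (D : Finset (ι →₀ ℕ)) (y : D → ℝ) : MvPolynomial ι ℝ →ₗ[ℝ] ℝ :=
  ∑ mo : D, y mo • lcoeff ℝ mo.1

theorem LY_apply {ι : Type} (D : Finset (ι →₀ ℕ)) (y : D → ℝ) (p : MvPolynomial ι ℝ) :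
    LY D y p = ∑ mo : D, y mo * coeff mo.1 p := by
  simp [LY]

theorem LY_add {ι : Type} (D : Finset (ι →₀ ℕ)) (y z : D → ℝ) (p : MvPolynomial ι ℝ) :
    LY D (y + z) p = LY D y p + LY D z p := by
  simp [LY_apply, add_mul, Finset.sum_add_distrib]

theorem LY_smul {ι : Type} (D : Finset (ι →₀ ℕ)) (c : ℝ) (y : D → ℝ) (p : MvPolynomial ι ℝ) :
    LY D (c • y) p = c * LY D y p := by
  simp [LY_apply, Finset.mul_sum, mul_assoc]

theorem LY_eval {ι : Type} [Fintype ι] [DecidableEq ι] {N : ℕ} (c : ℝ) (la : ι → ℝ)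
    {p : MvPolynomial ι ℝ} (hp : p.IsHomogeneous N) :
    LY (Finset.finsuppAntidiag Finset.univ N) (fun mo => c * ∏ i, la i ^ mo.1 i) p
      = c * eval la p := by
  rw [LY_apply, eval_eq', Finset.mul_sum,
    Finset.sum_coe_sort (Finset.finsuppAntidiag (Finset.univ : Finset ι) N)
      (fun mo => (c * ∏ i, la i ^ mo i) * coeff mo p)]
  symm
  refine Finset.sum_subset_zero_on_sdiff ?_ ?_ ?_
  · intro mo hmo
    rw [Finset.mem_finsuppAntidiag]
    refine ⟨?_, Finset.subset_univ _⟩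
    have := hp (mem_support_iff.mp hmo)
    rw [Finsupp.weight_apply, Finsupp.sum_fintype _ _ (by simp)] at this
    simpa using this
  · intro mo hmo
    have : coeff mo p = 0 := by simpa using (Finset.mem_sdiff.mp hmo).2
    rw [this, mul_zero]
  · intro mo _
    ring

/-- the moment matrices -/
noncomputable def mmat {ι : Type} (D : Finset (ι →₀ ℕ)) (q : MvPolynomial ι ℝ) :
    (D → ℝ) →ₗ[ℝ] Matrix ι ι ℝ where
  toFun y := Matrix.of fun a b => LY D y (q * (X a * X b))
  map_add' y z := by ext a b; simp [LY_add]
  map_smul' c y := by ext a b; simp [LY_smul]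

/-- scalar inequalities -/
noncomputable def smat {ι : Type} [DecidableEq ι] (D : Finset (ι →₀ ℕ)) (q : MvPolynomial ι ℝ) :
    (D → ℝ) →ₗ[ℝ] Matrix ι ι ℝ where
  toFun y := LY D y q • (1 : Matrix ι ι ℝ)
  map_add' y z := by rw [LY_add, add_smul]
  map_smul' c y := by rw [LY_smul, mul_smul]; rfl

/-- the projection -/
noncomputable def pmap {ι : Type} [Fintype ι] {n : ℕ} (D : Finset (ι →₀ ℕ))
    (q : ι → MvPolynomial ι ℝ) (v : ι → Fin n → ℝ) : (D → ℝ) →ₗ[ℝ] (Fin n → ℝ) where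
  toFun y := ∑ a, LY D y (q a) • v a
  map_add' y z := by simp only [LY_add, add_smul, Finset.sum_add_distrib]
  map_smul' c y := by simp only [LY_smul, mul_smul, Finset.smul_sum]; rfl

/-- the polarized pullback of the polynomial -/
noncomputable def Gp {ι : Type} [Fintype ι] {n : ℕ} (N : ℕ)
    (Φ : MvPolynomial (Fin n) ℝ →ₗ[ℝ] ℝ) (v : ι → Fin n → ℝ) : MvPolynomial ι ℝ :=
  ∑ I : Fin N → ι, C (Φ (∏ k, lin (v (I k)))) * ∏ k, X (I k)

theorem Gp_TH {ι : Type} [Fintype ι] {n : ℕ} (N : ℕ) (L : MvPolynomial ι ℝ →ₗ[ℝ] ℝ)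
    (Φ : MvPolynomial (Fin n) ℝ →ₗ[ℝ] ℝ) (v : ι → Fin n → ℝ) :
    TH L Φ (gl v ^ N) = L (Gp N Φ v) := by
  have : gl v ^ N = ∏ k : Fin N, gl v := by simp
  rw [this, gl_prod (fun _ : Fin N => v), map_sum, Gp, map_sum]
  refine Finset.sum_congr rfl fun J _ => ?_
  rw [TH_tmul, ← smul_eq_C_mul, map_smul, smul_eq_mul, mul_comm]

theorem Gp_eval {ι : Type} [Fintype ι] {n : ℕ} (N : ℕ)
    (Φ : MvPolynomial (Fin n) ℝ →ₗ[ℝ] ℝ) (v : ι → Fin n → ℝ) (la : ι → ℝ) :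
    eval la (Gp N Φ v) = Φ (lin (∑ a, la a • v a) ^ N) := by
  classical
  rw [lin_sum, Fintype.sum_pow, map_sum, Gp, map_sum]
  refine Finset.sum_congr rfl fun J _ => ?_
  simp only [lin_smul, smul_eq_C_mul, Finset.prod_mul_distrib, map_mul, eval_C, map_prod, eval_X]
  rw [← map_prod, ← smul_eq_C_mul, map_smul, smul_eq_mul, mul_comm]

theorem Gp_hom {ι : Type} [Fintype ι] {n : ℕ} (N : ℕ)
    (Φ : MvPolynomial (Fin n) ℝ →ₗ[ℝ] ℝ) (v : ι → Fin n → ℝ) :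
    (Gp N Φ v).IsHomogeneous N := by
  refine IsHomogeneous.sum _ _ _ fun I _ => ?_
  have := (isHomogeneous_C ι (Φ (∏ k, lin (v (I k))))).mul
    (IsHomogeneous.prod Finset.univ (fun k => (X (I k) : MvPolynomial ι ℝ)) (fun _ => 1)
      fun k _ => isHomogeneous_X _ _)
  simpa using this

theorem piece_conv {n m : ℕ} {g : MvPolynomial (Fin n) ℝ} (hg : g.IsHomogeneous (m + 2))
    {Φ : MvPolynomial (Fin n) ℝ →ₗ[ℝ] ℝ} (hΦ : ∀ y, Φ (lin y ^ (m + 2)) = eval y g)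
    {ι : Type} [Fintype ι]
    (B : Set (Fin n → ℝ)) (hB : Convex ℝ B) (s : (Fin n → ℝ) →ₗ[ℝ] ℝ)
    (hneg : ∀ p : Fin m → Fin n → ℝ, (∀ k, p k ∈ B) → ∀ w, s w = 0 →
      Φ ((∏ k, lin (p k)) * (lin w * lin w)) ≤ 0)
    (v : ι → Fin n → ℝ) (hv : ∀ a, v a ∈ B) (hsv : ∀ a, s (v a) = 1)
    (L : MvPolynomial ι ℝ →ₗ[ℝ] ℝ) (hmu : ∀ a, 0 ≤ L (X a * (∑ b, X b) ^ (m + 1)))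
    (hG : 0 ≤ L (Gp (m + 2) Φ v))
    (hpsd : ∀ J : Fin m → ι,
      (Matrix.of fun a b => L ((∏ k, X (J k)) * (X a * X b))).PosSemidef) :
    0 ≤ eval (∑ a, L (X a * (∑ b, X b) ^ (m + 1)) • v a) g := by
  obtain ⟨mu, hmu'⟩ : ∃ mu : ι → ℝ, ∀ a, mu a = L (X a * (∑ b, X b) ^ (m + 1)) :=
    ⟨_, fun _ => rfl⟩
  have hm00 : ∑ a, mu a = L ((∑ b, X b) ^ (m + 2)) := by
    simp only [hmu']
    rw [← map_sum, ← Finset.sum_mul, pow_succ' _ (m + 1)]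
  have TI := TH_ineq L Φ hpsd B s hneg v hv hsv
  rw [Gp_TH, ← hm00] at TI
  simp only [← hmu'] at hmu TI ⊢
  obtain ⟨x, hx⟩ : ∃ x, x = ∑ a, mu a • v a := ⟨_, rfl⟩
  rw [← hx]
  set m0 := ∑ a, mu a with hm0
  rcases (Finset.sum_nonneg fun a _ => hmu a : 0 ≤ m0).eq_or_lt with h0 | h0
  · have hz := (Finset.sum_eq_zero_iff_of_nonneg fun b _ => hmu b).mp h0.symm
    have : x = 0 := by
      rw [hx]
      exact Finset.sum_eq_zero fun a ha => by rw [hz a ha, zero_smul]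
    have h2 := eval_smul_hom hg 0 x
    rw [this, zero_smul] at h2
    rw [this, h2]
    simp
  · set z := m0⁻¹ • x with hz
    have hxz : x = m0 • z := by rw [hz, smul_smul, mul_inv_cancel₀ h0.ne', one_smul]
    have hz' : z = ∑ a, (m0⁻¹ * mu a) • v a := by
      rw [hz, hx, Finset.smul_sum]; simp only [smul_smul]
    have hs1 : ∑ a, m0⁻¹ * mu a = 1 := by
      rw [← Finset.mul_sum, ← hm0, inv_mul_cancel₀ h0.ne']
    have hzB : z ∈ B := by
      rw [hz']
      exact hB.sum_mem (fun a _ => mul_nonneg (inv_nonneg.mpr h0.le) (hmu a)) hs1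
        fun a _ => hv a
    have hsz : s z = 1 := by
      rw [hz', map_sum]
      simp only [map_smul, hsv, smul_eq_mul, mul_one, hs1]
    have hlin : ∑ a, mu a • (v a - z) = 0 := by
      simp only [smul_sub, Finset.sum_sub_distrib, ← Finset.sum_smul]
      rw [sub_eq_zero]
      exact hx.symm.trans hxz
    have := TI z hzB hsz hlin
    rw [hΦ] at this
    have h3 : 0 ≤ eval z g := nonneg_of_mul_nonneg_right (hG.trans this) h0
    rw [hxz, eval_smul_hom hg]
    exact mul_nonneg (pow_nonneg h0.le _) h3

theorem piece_SHF {n m : ℕ} {g : MvPolynomial (Fin n) ℝ} (hg : g.IsHomogeneous (m + 2))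
    {Φ : MvPolynomial (Fin n) ℝ →ₗ[ℝ] ℝ} (hΦ : ∀ y, Φ (lin y ^ (m + 2)) = eval y g)
    {ι : Type} [Fintype ι] [Nonempty ι]
    (B : Set (Fin n → ℝ)) (hB : Convex ℝ B) (s : (Fin n → ℝ) →ₗ[ℝ] ℝ)
    (hneg : ∀ p : Fin m → Fin n → ℝ, (∀ k, p k ∈ B) → ∀ w, s w = 0 →
      Φ ((∏ k, lin (p k)) * (lin w * lin w)) ≤ 0)
    (v : ι → Fin n → ℝ) (hv : ∀ a, v a ∈ B) (hsv : ∀ a, s (v a) = 1) :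
    SHF ι {x | ∃ la : ι → ℝ, (∀ a, 0 ≤ la a) ∧ x = ∑ a, la a • v a ∧ 0 ≤ eval x g} := by
  classical
  let D := Finset.finsuppAntidiag (Finset.univ : Finset ι) (m + 2)
  let q : ι → MvPolynomial ι ℝ := fun a => X a * (∑ b, X b) ^ (m + 1)
  have hqh : ∀ a, (q a).IsHomogeneous (m + 2) := by
    intro a
    have := (isHomogeneous_X ℝ a).mul ((IsHomogeneous.sum (Finset.univ : Finset ι)
      (fun b => (X b : MvPolynomial ι ℝ)) 1 fun b _ => isHomogeneous_X _ _).pow (m + 1))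
    convert this using 1
    ring
  have := SHF.of_space (n := n) (κ := ι) (V := D → ℝ) (J := (Fin m → ι) ⊕ ι ⊕ Unit)
    (Sum.elim (fun J => mmat D (∏ k, X (J k))) (Sum.elim (fun a => smat D (q a))
      fun _ => smat D (Gp (m + 2) Φ v))) (pmap D q v) (by
        rintro (J | a | j) y
        · ext a b; simp [mmat, mul_comm (X a)]
        · simp [smat, Matrix.IsSymm]
        · simp [smat, Matrix.IsSymm])
  convert this using 1
  ext x
  constructor
  · rintro ⟨la, hla, hx, hgx⟩
    set c : ℝ := ((∑ b, la b) ^ (m + 1))⁻¹ with hc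
    have hc0 : 0 ≤ c := inv_nonneg.mpr (pow_nonneg (Finset.sum_nonneg fun b _ => hla b) _)
    refine ⟨fun mo => c * ∏ i, la i ^ mo.1 i, ?_, ?_⟩
    · rintro (J | a | j)
      · have : (mmat D (∏ k, X (J k))) (fun mo => c * ∏ i, la i ^ mo.1 i) =
            (c * ∏ k, la (J k)) • Matrix.vecMulVec la (star la) := by
          ext a b
          have hh : ((∏ k, X (J k)) * (X a * X b) : MvPolynomial ι ℝ).IsHomogeneous (m + 2) := by
            have := (IsHomogeneous.prod Finset.univ (fun k => (X (J k) : MvPolynomial ι ℝ))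
              (fun _ => 1) fun k _ => isHomogeneous_X _ _).mul
              ((isHomogeneous_X ℝ a).mul (isHomogeneous_X ℝ b))
            simpa using this
          simp only [mmat, LinearMap.coe_mk, AddHom.coe_mk, Matrix.of_apply, Matrix.smul_apply,
            Matrix.vecMulVec_apply, smul_eq_mul]
          rw [LY_eval c la hh]
          simp [map_prod]
          ring
        simp only [Sum.elim_inl]
        rw [this]
        exact (Matrix.posSemidef_vecMulVec_self_star la).smul
          (mul_nonneg hc0 (Finset.prod_nonneg fun k _ => hla _))
      · simp only [Sum.elim_inl, Sum.elim_inr, smat, LinearMap.coe_mk, AddHom.coe_mk]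
        rw [smul_one_psd, LY_eval c la (hqh a)]
        refine mul_nonneg hc0 ?_
        simp only [q, map_mul, eval_X, map_pow, map_sum]
        exact mul_nonneg (hla a) (pow_nonneg (Finset.sum_nonneg fun b _ => hla b) _)
      · simp only [Sum.elim_inl, Sum.elim_inr, smat, LinearMap.coe_mk, AddHom.coe_mk]
        rw [smul_one_psd, LY_eval c la (Gp_hom _ _ _), Gp_eval, ← hx, hΦ]
        exact mul_nonneg hc0 hgx
    · simp only [pmap, LinearMap.coe_mk, AddHom.coe_mk]
      rw [hx]
      refine Finset.sum_congr rfl fun a _ => ?_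
      rw [LY_eval c la (hqh a)]
      congr 1
      simp only [q, map_mul, eval_X, map_pow, map_sum]
      by_cases h0 : ∑ b, la b = 0
      · have := (Finset.sum_eq_zero_iff_of_nonneg fun b _ => hla b).mp h0 a (Finset.mem_univ a)
        rw [this]; simp
      · rw [hc]
        field_simp
  · rintro ⟨y, hy, hyx⟩
    obtain ⟨L, hL⟩ : ∃ L, L = LY D y := ⟨_, rfl⟩
    have hmu : ∀ a, 0 ≤ L (q a) := by
      intro a
      have := hy (Sum.inr (Sum.inl a))
      simp only [Sum.elim_inl, Sum.elim_inr, smat, LinearMap.coe_mk, AddHom.coe_mk,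
        smul_one_psd, ← hL] at this
      exact this
    have hG : 0 ≤ L (Gp (m + 2) Φ v) := by
      have := hy (Sum.inr (Sum.inr ()))
      simp only [Sum.elim_inl, Sum.elim_inr, smat, LinearMap.coe_mk, AddHom.coe_mk,
        smul_one_psd, ← hL] at this
      exact this
    have hpsd : ∀ J : Fin m → ι,
      (Matrix.of fun a b => L ((∏ k, X (J k)) * (X a * X b))).PosSemidef := by
      intro J
      rw [hL]
      exact hy (Sum.inl J)
    have hx : x = ∑ a, L (q a) • v a := by
      rw [hL]
      exact hyx.symm
    refine ⟨fun a => L (q a), hmu, hx, ?_⟩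
    rw [hx]
    exact piece_conv hg hΦ B hB s hneg v hv hsv L hmu hG hpsd

theorem HP.eval_nonneg {n d : ℕ} {g : MvPolynomial (Fin n) ℝ} {e : Fin n → ℝ} (H : HP g e d)
    {a : Fin n → ℝ} (ha : a ∈ hypCone g e) : 0 ≤ eval a g := by
  by_cases h0 : eval a g = 0
  · exact h0.ge
  · have := (H.deriv_nonneg ha le_rfl (by rw [linePoly_eval]; simpa using h0)).1
    rw [linePoly_eval] at this
    simpa using this.le

/-- sign of a boolean -/
def bsgn : Bool → ℝ
  | true => 1
  | false => -1

theorem NI.piece {n d : ℕ} {g : MvPolynomial (Fin n) ℝ} {l e : Fin n → ℝ}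
    (I : NI g l e (d + 1) 1) {u : Fin n → ℝ} (hu : u ∈ hypCone g e) (hu0 : u ≠ 0)
    (hgu : eval u g = 0) : ∃ P : Set (Fin n → ℝ), SHF (Fin n × Bool) P ∧ P ⊆ hypCone g e ∧
      0 ∈ P ∧ (∀ c : ℝ, 0 ≤ c → ∀ x ∈ P, c • x ∈ P) ∧
      ∀ᶠ x in nhds u, x ∈ hypCone g e → x ∈ P := by
  classical
  have H := I.hp
  have hg0 := H.eval_zero
  obtain ⟨m, hm⟩ := I.two_le hu hu0 hgu
  rw [hm] at I H
  obtain ⟨Φ, hΦ⟩ := exists_polar g H.hom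
  obtain ⟨s, hsu, ρ₁, hρ₁, hneg⟩ := I.neg_nbhd hu hu0 hgu hΦ
  obtain ⟨ρ₂, hρ₂, hloc⟩ := H.local_mem hu (I.dir_pos hu hu0 hgu)
  have hne : Nonempty (Fin n) := by
    by_contra hcon
    rw [not_nonempty_iff] at hcon
    exact hu0 (Subsingleton.elim _ _)
  have hn : (0 : ℝ) < n := by
    have : 0 < n := Fin.pos_iff_nonempty.mpr hne
    exact_mod_cast this
  have hsc : Continuous s := s.continuous_of_finiteDimensional
  let b : Fin n → Fin n → ℝ := fun i => Pi.single i 1 - s (Pi.single i 1) • u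
  have hsb : ∀ i, s (b i) = 0 := by intro i; simp [b, hsu]
  have hball : ∀ᶠ r : ℝ in nhds 0, ∀ a : Fin n × Bool,
      u + (bsgn a.2 * r) • b a.1 ∈ Metric.ball u ρ₁ ∩ Metric.ball u ρ₂ := by
    rw [Filter.eventually_all]
    intro a
    have hc : Continuous fun r : ℝ => u + (bsgn a.2 * r) • b a.1 := by fun_prop
    refine hc.continuousAt.eventually_mem ?_
    simp only [mul_zero, zero_smul, add_zero]
    exact Filter.inter_mem (Metric.ball_mem_nhds u hρ₁) (Metric.ball_mem_nhds u hρ₂)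
  obtain ⟨r, hr, hr0⟩ := ((hball.filter_mono nhdsWithin_le_nhds).and
    (self_mem_nhdsWithin (a := (0 : ℝ)) (s := Set.Ioi 0))).exists
  have hr0 : 0 < r := hr0
  let v : Fin n × Bool → Fin n → ℝ := fun a => u + (bsgn a.2 * r) • b a.1
  have hsv : ∀ a, s (v a) = 1 := by intro a; simp [v, hsu, hsb]
  have hB := (convex_ball u ρ₁).inter (convex_ball u ρ₂)
  have hne2 : Nonempty (Fin n × Bool) := inferInstance
  refine ⟨_, piece_SHF H.hom hΦ _ hB s (fun p hp => hneg p fun k => (hp k).1) v hr hsv,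
    ?_, ?_, ?_, ?_⟩
  · rintro x ⟨la, hla, hx, hgx⟩
    rcases (Finset.sum_nonneg fun a _ => hla a : 0 ≤ ∑ a, la a).eq_or_lt with h0 | h0
    · have hz := (Finset.sum_eq_zero_iff_of_nonneg fun b _ => hla b).mp h0.symm
      have : x = 0 := by
        rw [hx]
        exact Finset.sum_eq_zero fun a ha => by rw [hz a ha, zero_smul]
      rw [this]
      exact H.zero_mem
    · set m0 := ∑ a, la a with hm0
      have hxz : x = m0 • (m0⁻¹ • x) := by rw [smul_smul, mul_inv_cancel₀ h0.ne', one_smul]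
      rw [hxz]
      refine H.cone_smul (hloc _ ?_ ?_) _ h0.le
      · have hz' : m0⁻¹ • x = ∑ a, (m0⁻¹ * la a) • v a := by
          rw [hx, Finset.smul_sum]; simp only [smul_smul]
        have hs1 : ∑ a, m0⁻¹ * la a = 1 := by
          rw [← Finset.mul_sum, ← hm0, inv_mul_cancel₀ h0.ne']
        rw [hz']
        exact (hB.sum_mem (fun a _ => mul_nonneg (inv_nonneg.mpr h0.le) (hla a)) hs1
          fun a _ => hr a).2
      · rw [eval_smul_hom H.hom]
        exact mul_nonneg (pow_nonneg (inv_nonneg.mpr h0.le) _) hgx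
  · exact ⟨fun _ => 0, fun _ => le_rfl, by simp, hg0.ge⟩
  · rintro c hc x ⟨la, hla, hx, hgx⟩
    refine ⟨fun a => c * la a, fun a => mul_nonneg hc (hla a), ?_, ?_⟩
    · rw [hx, Finset.smul_sum]; simp only [smul_smul]
    · rw [eval_smul_hom H.hom]
      exact mul_nonneg (pow_nonneg hc _) hgx
  · have hev : ∀ᶠ x in nhds u, ∀ a : Fin n × Bool,
        0 < s x / (2 * n) + bsgn a.2 * ((x a.1 - u a.1) / (2 * r)) := by
      rw [Filter.eventually_all]
      intro a
      have hc : Continuous fun x : Fin n → ℝ =>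
        s x / (2 * n) + bsgn a.2 * ((x a.1 - u a.1) / (2 * r)) := by fun_prop
      refine hc.continuousAt.eventually (lt_mem_nhds ?_)
      simp only [hsu, sub_self, zero_div, mul_zero, add_zero]
      positivity
    filter_upwards [hev] with x hx hxc
    refine ⟨_, fun a => (hx a).le, ?_, H.eval_nonneg hxc⟩
    have hy : ∀ y : Fin n → ℝ, ∑ i, y i • (Pi.single i 1 : Fin n → ℝ) = y := by
      intro y; ext k; simp [Finset.sum_apply, Pi.single_apply]
    have hyb : ∑ i, (x i - u i) • b i = x - s x • u := by
      simp only [b, smul_sub, Finset.sum_sub_distrib, smul_smul, ← Finset.sum_smul]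
      have h1 := hy (x - u)
      simp only [Pi.sub_apply] at h1
      have h2 : ∑ i, (x i - u i) * s (Pi.single i 1) = s x - 1 := by
        have := congrArg s h1
        rw [map_sum, map_sub, hsu] at this
        simpa only [map_smul, smul_eq_mul] using this
      rw [h1, h2, sub_smul, one_smul]
      abel
    have hi : ∀ i, (s x / (2 * n) + bsgn true * ((x i - u i) / (2 * r))) • v (i, true) +
        (s x / (2 * n) + bsgn false * ((x i - u i) / (2 * r))) • v (i, false) =
        (s x / n) • u + (x i - u i) • b i := by
      intro i
      ext k
      simp only [v, bsgn, Pi.add_apply, Pi.smul_apply, smul_eq_mul]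
      field_simp
      ring
    rw [Fintype.sum_prod_type]
    simp only [Fintype.sum_bool, hi, Finset.sum_add_distrib, hyb, Finset.sum_const,
      Finset.card_univ, Fintype.card_fin]
    rw [← Nat.cast_smul_eq_nsmul ℝ, smul_smul, mul_div_cancel₀ _ hn.ne']
    abel

theorem HP.decomp {n d : ℕ} {g : MvPolynomial (Fin n) ℝ} {e : Fin n → ℝ} (H : HP g e (d + 1))
    {x : Fin n → ℝ} (hx : x ∈ hypCone g e) :
    ∃ (y : Fin n → ℝ) (t : ℝ), y ∈ hypCone g e ∧ eval y g = 0 ∧ 0 ≤ t ∧ x = y + t • e := by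
  classical
  obtain ⟨s, hs, hf⟩ := H.factor' x
  have hsne : s ≠ 0 := by rintro rfl; simp at hs
  obtain ⟨r, hr, hmax⟩ : ∃ r ∈ s, ∀ r' ∈ s, r' ≤ r := by
    have hne : s.toFinset.Nonempty := by
      rw [Multiset.toFinset_nonempty]; exact hsne
    refine ⟨s.toFinset.max' hne, ?_, fun r' hr' => ?_⟩
    · have := s.toFinset.max'_mem hne
      rwa [Multiset.mem_toFinset] at this
    · exact s.toFinset.le_max' r' (by rwa [Multiset.mem_toFinset])
  have h0 : eval (x + r • e) g = 0 := by
    rw [← linePoly_eval, hf, Polynomial.eval_mul, rp_eval_mem s hr, mul_zero]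
  have hr0 : r ≤ 0 := by
    by_contra hcon
    exact (H.cone_pos hx r (not_le.mp hcon)).ne' h0
  refine ⟨x + r • e, -r, H.mem_cone fun t ht => ?_, h0, by linarith, ?_⟩
  · rw [add_assoc, ← add_smul, ← linePoly_eval, hf, Polynomial.eval_mul, Polynomial.eval_C]
    exact mul_pos H.pos (rp_pos s _ fun r' hr' => by linarith [hmax r' hr']).1
  · rw [neg_smul]; abel

open Pointwise in
theorem NI.shadow {n d : ℕ} {g : MvPolynomial (Fin n) ℝ} {l e : Fin n → ℝ}
    (I : NI g l e (d + 1) 1) : IsSpectrahedralShadowCone (hypCone g e) := by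
  classical
  have H := I.hp
  let Kc : Set (Fin n → ℝ) := (hypCone g e ∩ {x | eval x g = 0}) ∩ Metric.sphere 0 1
  have hK : IsCompact Kc := (isCompact_sphere _ _).inter_left
    (H.isClosed.inter (isClosed_eq (MvPolynomial.continuous_eval g) continuous_const))
  have hKp : ∀ u : Kc, ∃ P : Set (Fin n → ℝ), SHF (Fin n × Bool) P ∧ P ⊆ hypCone g e ∧
      0 ∈ P ∧ (∀ c : ℝ, 0 ≤ c → ∀ x ∈ P, c • x ∈ P) ∧
      ∀ᶠ x in nhds (u : Fin n → ℝ), x ∈ hypCone g e → x ∈ P := by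
    rintro ⟨u, ⟨hu, hgu⟩, hu1⟩
    refine I.piece hu ?_ hgu
    rintro rfl
    simp at hu1
  choose P hP1 hP2 hP3 hP4 hP5 using hKp
  obtain ⟨t, ht⟩ := hK.elim_nhds_subcover' (fun u hu => {x | x ∈ hypCone g e → x ∈ P ⟨u, hu⟩})
    (fun u hu => hP5 ⟨u, hu⟩)
  have hne : Nonempty (Fin n) := by
    by_contra hcon
    rw [not_nonempty_iff] at hcon
    exact H.e_ne (Subsingleton.elim _ _)
  have key : hypCone g e = (∑ u ∈ t, P u) + {x | ∃ t : ℝ, 0 ≤ t ∧ x = t • e} := by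
    ext x
    constructor
    · intro hx
      obtain ⟨y, c, hy, hgy, hc, rfl⟩ := H.decomp hx
      refine Set.add_mem_add ?_ ⟨c, hc, rfl⟩
      rw [Set.mem_finsetSum]
      by_cases hy0 : y = 0
      · exact ⟨fun _ => 0, fun {i} _ => hP3 i, by simp [hy0]⟩
      · have hny : 0 < ‖y‖ := norm_pos_iff.mpr hy0
        have hz : ‖y‖⁻¹ • y ∈ hypCone g e := H.cone_smul hy _ (inv_nonneg.mpr hny.le)
        have hzK : ‖y‖⁻¹ • y ∈ Kc := by
          refine ⟨⟨hz, ?_⟩, ?_⟩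
          · show eval (‖y‖⁻¹ • y) g = 0
            rw [eval_smul_hom H.hom, hgy, mul_zero]
          · rw [mem_sphere_zero_iff_norm, norm_smul, norm_inv, norm_norm,
              inv_mul_cancel₀ hny.ne']
        obtain ⟨u, hu⟩ := Set.mem_iUnion.mp (ht hzK)
        obtain ⟨hut, hu⟩ := Set.mem_iUnion.mp hu
        have hyP : y ∈ P u := by
          have := hP4 u ‖y‖ hny.le _ (hu hz)
          rwa [smul_smul, mul_inv_cancel₀ hny.ne', one_smul] at this
        refine ⟨fun i => if i = u then y else 0, fun {i} _ => ?_, ?_⟩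
        · by_cases hiu : i = u
          · subst hiu; simpa using hyP
          · simpa [hiu] using hP3 i
        · rw [Finset.sum_ite_eq' t u, if_pos hut]
    · rintro ⟨y, hy, _, ⟨c, hc, rfl⟩, rfl⟩
      refine H.cone_add_e ?_ c hc
      rw [Set.mem_finsetSum] at hy
      obtain ⟨f, hf, rfl⟩ := hy
      have : ∀ t' : Finset Kc, t' ⊆ t → ∑ i ∈ t', f i ∈ hypCone g e := by
        intro t'
        induction t' using Finset.induction_on with
        | empty => intro _; simpa using H.zero_mem
        | insert i t' hi ih =>
          intro hsub
          rw [Finset.sum_insert hi]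
          exact H.cone_add (hP2 i (hf (hsub (by simp))))
            (ih fun j hj => hsub (by simp [hj]))
      exact this t (Finset.Subset.refl t)
  rw [key]
  have hne2 : Nonempty (Fin n × Bool) := inferInstance
  exact ((SHF.sum t P fun u _ => hP1 u).add (SHF.ray e)).isShadow

theorem linePoly_negp {n : ℕ} (f : MvPolynomial (Fin n) ℝ) (a v : Fin n → ℝ) :
    linePoly (-f) a v = -linePoly f a v := by simp [linePoly]

theorem hypCone_negp {n : ℕ} (f : MvPolynomial (Fin n) ℝ) (e : Fin n → ℝ) :
    hypCone (-f) e = hypCone f e := by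
  simp [hypCone, NonnegRealRooted, linePoly_negp]

theorem isHyperbolic_negp {n : ℕ} (f : MvPolynomial (Fin n) ℝ) (e : Fin n → ℝ) :
    IsHyperbolic (-f) e ↔ IsHyperbolic f e := by
  simp [IsHyperbolic, RealRooted, linePoly_negp]

theorem multAt_negp {n : ℕ} (f : MvPolynomial (Fin n) ℝ) (a : Fin n → ℝ) :
    multAt (-f) a = multAt f a := by
  simp [multAt]

theorem dirDeriv_negp {n : ℕ} (e : Fin n → ℝ) (f : MvPolynomial (Fin n) ℝ) :
    dirDeriv e (-f) = -dirDeriv e f := by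
  simp [dirDeriv]

theorem nuijSeq_eq {n : ℕ} (l e : Fin n → ℝ) (d : ℕ) (h : MvPolynomial (Fin n) ℝ) (k : ℕ) :
    nuijSeq l e d h k = (nstep l e (1 / (k : ℝ)))^[d] h := rfl

theorem nuijSeq_negp {n : ℕ} (l e : Fin n → ℝ) (d : ℕ) (h : MvPolynomial (Fin n) ℝ) (k : ℕ) :
    nuijSeq l e d (-h) k = -nuijSeq l e d h k := by
  rw [nuijSeq_eq, nuijSeq_eq]
  have h1 : ∀ q, nstep l e (1 / (k : ℝ)) (-q) = - nstep l e (1 / (k : ℝ)) q := by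
    intro q
    simp only [nstep, dirDeriv_negp, mul_neg, smul_neg, neg_add]
  induction d generalizing h with
  | zero => rfl
  | succ d ih => rw [Function.iterate_succ_apply, Function.iterate_succ_apply, h1, ih]

theorem main_pos {n d : ℕ} (h : MvPolynomial (Fin n) ℝ) (e : Fin n → ℝ)
    (H : HP h e (d + 1)) (l : Fin n → ℝ)
    (hl : ∀ a ∈ hypCone h e, a ≠ 0 → 0 < ∑ i, l i * a i) :
    (∀ k ≥ 1,
        IsHyperbolic (nuijSeq l e (d + 1) h k) e ∧
        (∀ a ∈ frontier (hypCone (nuijSeq l e (d + 1) h k) e), a ≠ 0 →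
          multAt (nuijSeq l e (d + 1) h k) a = 1) ∧
        IsSpectrahedralShadowCone (hypCone (nuijSeq l e (d + 1) h k) e)) ∧
      (∀ mo : Fin n →₀ ℕ,
        Filter.Tendsto (fun k => MvPolynomial.coeff mo (nuijSeq l e (d + 1) h k))
          Filter.atTop (nhds (MvPolynomial.coeff mo h))) ∧
      hypCone h e = {x : Fin n → ℝ | ∃ c : ℕ → Fin n → ℝ,
        (∀ k ≥ 1, c k ∈ hypCone (nuijSeq l e (d + 1) h k) e) ∧
        Filter.Tendsto c Filter.atTop (nhds x)} := by
  have key : ∀ k : ℕ, 1 ≤ k → NI (nuijSeq l e (d + 1) h k) l e (d + 1) 1 ∧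
      hypCone h e ⊆ hypCone (nuijSeq l e (d + 1) h k) e := by
    intro k hk
    have hk' : (0 : ℝ) < 1 / (k : ℝ) := by
      have : (0 : ℝ) < k := by exact_mod_cast hk
      positivity
    have := NI.iter hk' (d + 1) (NI.start H hl)
    rw [Nat.sub_self] at this
    exact this
  have hlim : Filter.Tendsto (fun k : ℕ => 1 / (k : ℝ)) Filter.atTop (nhds 0) :=
    tendsto_one_div_atTop_nhds_zero_nat
  refine ⟨fun k hk => ?_, fun mo => ?_, ?_⟩
  · have I := (key k hk).1
    exact ⟨I.hp.isHyperbolic, fun a ha ha0 => I.multAt_eq ha ha0, I.shadow⟩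
  · have := ((nstep_coeff_cont l e (d + 1) h mo).tendsto 0).comp hlim
    rw [nstep_zero] at this
    exact this
  · ext x
    constructor
    · intro hx
      exact ⟨fun _ => x, fun k hk => (key k hk).2 hx, tendsto_const_nhds⟩
    · rintro ⟨c, hc, hcx⟩
      refine H.mem_cone' fun t ht => ?_
      have h1 : Filter.Tendsto (fun k : ℕ => eval e (nuijSeq l e (d + 1) h k) * t ^ (d + 1))
          Filter.atTop (nhds (eval e h * t ^ (d + 1))) := by
        have := ((nstep_eval_cont l e (d + 1) h).tendsto (0, e)).comp
          (hlim.prodMk_nhds (tendsto_const_nhds (x := e)))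
        simp only [nstep_zero] at this
        exact this.mul_const _
      have h2 : Filter.Tendsto (fun k : ℕ => eval (c k + t • e) (nuijSeq l e (d + 1) h k))
          Filter.atTop (nhds (eval (x + t • e) h)) := by
        have := ((nstep_eval_cont l e (d + 1) h).tendsto (0, x + t • e)).comp
          (hlim.prodMk_nhds (hcx.add_const (t • e)))
        simp only [nstep_zero] at this
        exact this
      refine le_of_tendsto_of_tendsto h1 h2 ?_
      filter_upwards [Filter.eventually_ge_atTop 1] with k hk
      exact (key k hk).1.hp.cone_ge (hc k hk) t ht

/-- Let `h` be homogeneous of degree `d`, hyperbolic with respect to `e`,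
with pointed hyperbolicity cone, and let `ℓ` be a linear form strictly positive on
`Λ_e(h) \ {0}`. Then for all sufficiently large `k` the polynomials
`h_k = (id + (1/k)·ℓ·∂_e)^d h` are hyperbolic with respect to `e` and every non-zero
boundary point of `Λ_e(h_k)` is a smooth point of `h_k`; moreover `h_k → h`
coefficientwise, and `Λ_e(h)` is the limit of the sequence of spectrahedral shadows
`Λ_e(h_k)`. -/
theorem hyperbolicity_cone_limit_of_spectrahedral_shadows
    {n d : ℕ} (h : MvPolynomial (Fin n) ℝ) (e : Fin n → ℝ)
    (hhom : h.IsHomogeneous d) (hhyp : IsHyperbolic h e)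
    (hpt : PointedSet (hypCone h e))
    (l : Fin n → ℝ) (hl : ∀ a ∈ hypCone h e, a ≠ 0 → 0 < ∑ i, l i * a i) :
    ∃ K : ℕ,
      (∀ k ≥ K,
        IsHyperbolic (nuijSeq l e d h k) e ∧
        (∀ a ∈ frontier (hypCone (nuijSeq l e d h k) e), a ≠ 0 →
          multAt (nuijSeq l e d h k) a = 1) ∧
        IsSpectrahedralShadowCone (hypCone (nuijSeq l e d h k) e)) ∧
      (∀ mo : Fin n →₀ ℕ,
        Filter.Tendsto (fun k => MvPolynomial.coeff mo (nuijSeq l e d h k))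
          Filter.atTop (nhds (MvPolynomial.coeff mo h))) ∧
      hypCone h e = {x : Fin n → ℝ | ∃ c : ℕ → Fin n → ℝ,
        (∀ k ≥ K, c k ∈ hypCone (nuijSeq l e d h k) e) ∧
        Filter.Tendsto c Filter.atTop (nhds x)} := by
  rcases d with _ | d
  · obtain ⟨c, rfl⟩ : ∃ c : ℝ, h = C c := ⟨_, totalDegree_eq_zero_iff_eq_C.mp
      (Nat.le_zero.mp hhom.totalDegree_le)⟩
    have hc : c ≠ 0 := by simpa using hhyp.1
    have hu : hypCone (C c : MvPolynomial (Fin n) ℝ) e = Set.univ := by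
      refine Set.eq_univ_of_forall fun a z hz => ?_
      simp [linePoly, hc] at hz
    have h0 : ∀ a : Fin n → ℝ, a = 0 := by
      intro a
      by_contra ha
      have h1 := hl a (by rw [hu]; trivial) ha
      have h2 := hl (-a) (by rw [hu]; trivial) (neg_ne_zero.mpr ha)
      simp only [Pi.neg_apply, mul_neg, Finset.sum_neg_distrib] at h2
      linarith
    have hk : ∀ k, nuijSeq l e 0 (C c) k = C c := fun k => rfl
    have hu0 : (Set.univ : Set (Fin n → ℝ)) = {0} := by
      ext a; simp [h0 a]
    simp only [hk]
    refine ⟨1, fun k _ => ⟨hhyp, ?_, ?_⟩, fun mo => tendsto_const_nhds, ?_⟩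
    · rw [hu, frontier_univ]
      intro a ha
      exact ha.elim
    · rw [hu, hu0]
      exact (SHF.zero (κ := Unit)).isShadow
    · rw [hu]
      refine (Set.eq_univ_of_forall fun x => ?_).symm
      exact ⟨fun _ => x, fun _ _ => trivial, tendsto_const_nhds⟩
  · refine ⟨1, ?_⟩
    rcases lt_or_gt_of_ne hhyp.1 with hneg | hpos
    · have H : HP (-h) e (d + 1) := ((isHyperbolic_negp h e).mpr hhyp).hp hhom.neg
        (by rw [map_neg]; linarith)
      have := main_pos (-h) e H l (by rw [hypCone_negp]; exact hl)
      simp only [nuijSeq_negp, hypCone_negp, isHyperbolic_negp, multAt_negp, coeff_neg] at this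
      refine ⟨this.1, fun mo => ?_, this.2.2⟩
      simpa using (this.2.1 mo).neg
    · exact main_pos h e (hhyp.hp hhom hpos) l hl
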